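/- Let K be a field of characteristic zero, n ≥ 1, and let Γ be a subgroup of GL_n(K). If Γ is boundedly generated by semi-simple elements, i.e., there exist semi-simple elements γ₁, …, γ_r ∈ Γ with Γ = ⟨γ₁⟩⋯⟨γ_r⟩ (every element of Γ can be written as γ₁^{k₁}⋯γ_r^{k_r} with k₁, …, k_r ∈ ℤ), then Γ is virtually solvable. -/

import Mathlib

open Matrix

/-- An element of `GL n K` is semi-simple if the corresponding linear endomorphism
of `K^n` is a semisimple endomorphism. -/
def IsSemisimpleElt {n : ℕ} {K : Type*} [Field K] (g : GL (Fin n) K) : Prop :=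
  Module.End.IsSemisimple ((g : Matrix (Fin n) (Fin n) K).mulVecLin)

/-- A group is virtually solvable if it has a solvable subgroup of finite index. -/
def IsVirtuallySolvable (G : Type*) [Group G] : Prop :=
  ∃ H : Subgroup G, H.FiniteIndex ∧ IsSolvable ↥H

section aux_part
open NumberField Filter Topology ENNReal

noncomputable def ww (s : ℝ) (n : ℕ) : ℝ≥0∞ := ENNReal.ofReal ((n : ℝ) ^ (-s))

lemma ww_mul (s : ℝ) (a b : ℕ) : ww s (a * b) = ww s a * ww s b := by
  unfold ww
  rw [← ENNReal.ofReal_mul (by positivity)]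
  congr 1
  push_cast
  exact Real.mul_rpow (by positivity) (by positivity)

lemma ww_zero {s : ℝ} (hs : 1 < s) : ww s 0 = 0 := by
  unfold ww
  rw [Nat.cast_zero, Real.zero_rpow (by linarith)]; simp

/-- Dedekind zeta as an extended nonnegative real. -/
noncomputable def ZZ (E : Type*) [Field E] [NumberField E] (s : ℝ) : ℝ≥0∞ :=
  ∑' I : Ideal (𝓞 E), ww s (Ideal.absNorm I)

noncomputable def LL (E : Type*) [Field E] [NumberField E] (s : ℝ) : ℝ≥0∞ :=
  ∑' I : Ideal (𝓞 E), ENNReal.ofReal (Real.log (Ideal.absNorm I)) * ww s (Ideal.absNorm I)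

lemma tendsto_squeeze {f : ℝ → ℝ} {κ : ℝ} (hκ : 0 < κ)
    (h : Tendsto (fun s : ℝ => (s - 1) * f s) (𝓝[>] 1) (𝓝 κ)) :
    ∀ᶠ s in 𝓝[>] (1 : ℝ), 0.9 * κ / (s - 1) ≤ f s ∧ f s ≤ 1.1 * κ / (s - 1) := by
  have h1 := h.eventually (Ioo_mem_nhds (show 0.9 * κ < κ by linarith) (show κ < 1.1 * κ by linarith))
  filter_upwards [h1, self_mem_nhdsWithin] with s hs hs1
  have : 0 < s - 1 := by simpa using hs1
  rw [div_le_iff₀ this, le_div_iff₀ this, mul_comm (f s)]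
  exact ⟨hs.1.le, hs.2.le⟩

lemma ZZ_eq (E : Type*) [Field E] [NumberField E] {s : ℝ} (hs : 1 < s)
    (r : ℝ) (hr : 0 < r) (hh : dedekindZeta E s = (r : ℂ)) : ZZ E s = ENNReal.ofReal r := by
  set c : ℕ → ℝ := fun n => (Nat.card {I : Ideal (𝓞 E) // Ideal.absNorm I = n} : ℝ) with hc
  have h1 : ∀ n : ℕ, LSeries.term (fun n ↦ (Nat.card {I : Ideal (𝓞 E) // Ideal.absNorm I = n} : ℂ)) s n
      = ((c n * (n : ℝ) ^ (-s) : ℝ) : ℂ) := by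
    intro n
    rcases Nat.eq_zero_or_pos n with rfl | hn
    · simp [Real.zero_rpow (show -s ≠ 0 by linarith)]
    · rw [LSeries.term_of_ne_zero hn.ne']
      push_cast
      rw [Complex.ofReal_cpow (by positivity)]
      push_cast
      rw [Complex.cpow_neg]
      simp [hc, div_eq_mul_inv]
  unfold dedekindZeta LSeries at hh
  simp_rw [h1] at hh
  rw [← Complex.ofReal_tsum] at hh
  have hh' : ∑' n : ℕ, c n * (n : ℝ) ^ (-s) = r := by exact_mod_cast hh
  have hsum : Summable (fun n : ℕ => c n * (n : ℝ) ^ (-s)) := by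
    by_contra hns
    rw [tsum_eq_zero_of_not_summable hns] at hh'
    linarith
  rw [← hh', ENNReal.ofReal_tsum_of_nonneg (fun n => by positivity) hsum]
  unfold ZZ
  rw [← (Equiv.sigmaFiberEquiv (fun I : Ideal (𝓞 E) => Ideal.absNorm I)).tsum_eq, ENNReal.tsum_sigma']
  refine tsum_congr fun n => ?_
  have : ∀ x : {I : Ideal (𝓞 E) // Ideal.absNorm I = n},
    ww s (Ideal.absNorm ((Equiv.sigmaFiberEquiv (fun I : Ideal (𝓞 E) => Ideal.absNorm I)) ⟨n, x⟩)) = ww s n := by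
    intro x
    congr 1
    exact x.2
  simp_rw [this]
  have : Finite {I : Ideal (𝓞 E) // Ideal.absNorm I = n} := Ideal.finite_setOfPred_absNorm_eq n
  have := Fintype.ofFinite {I : Ideal (𝓞 E) // Ideal.absNorm I = n}
  rw [tsum_fintype]
  simp only [Finset.sum_const, Finset.card_univ, hc, Nat.card_eq_fintype_card, nsmul_eq_mul]
  rw [ENNReal.ofReal_mul (by positivity), ENNReal.ofReal_natCast]
  rfl

lemma ZZ_bounds (E : Type*) [Field E] [NumberField E] : ∃ κ : ℝ, 0 < κ ∧
    ∀ᶠ s in 𝓝[>] (1 : ℝ), ENNReal.ofReal (0.9 * κ / (s - 1)) ≤ ZZ E s ∧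
      ZZ E s ≤ ENNReal.ofReal (1.1 * κ / (s - 1)) := by
  refine ⟨dedekindZeta_residue E, dedekindZeta_residue_pos E, ?_⟩
  have h := tendsto_sub_one_mul_dedekindZeta_nhdsGT E
  have hre : ∀ᶠ s : ℝ in 𝓝[>] (1 : ℝ), ∃ r : ℝ, dedekindZeta E s = (r : ℂ) := by
    filter_upwards [self_mem_nhdsWithin] with s hs1
    have hs1 : 1 < s := by simpa using hs1
    refine ⟨∑' n : ℕ, (Nat.card {I : Ideal (𝓞 E) // Ideal.absNorm I = n} : ℝ) * (n : ℝ) ^ (-s), ?_⟩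
    rw [Complex.ofReal_tsum]
    unfold dedekindZeta LSeries
    refine tsum_congr fun n => ?_
    rcases Nat.eq_zero_or_pos n with rfl | hn
    · simp [Real.zero_rpow (show -s ≠ 0 by linarith)]
    · rw [LSeries.term_of_ne_zero hn.ne']
      push_cast
      rw [Complex.ofReal_cpow (by positivity)]
      push_cast
      rw [Complex.cpow_neg]
      simp [div_eq_mul_inv]
  have h2 : Tendsto (fun s : ℝ => (s - 1) * (dedekindZeta E s).re) (𝓝[>] 1) (𝓝 (dedekindZeta_residue E)) := by
    have := (Complex.continuous_re.tendsto _).comp h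
    simpa [Function.comp_def, ← Complex.ofReal_one, ← Complex.ofReal_sub] using this
  filter_upwards [tendsto_squeeze (dedekindZeta_residue_pos E) h2, hre, self_mem_nhdsWithin] with s hb hr hs1
  have hs1 : 1 < s := by simpa using hs1
  obtain ⟨r, hr⟩ := hr
  rw [hr, Complex.ofReal_re] at hb
  have hpos : 0 < r := lt_of_lt_of_le (by
    have := dedekindZeta_residue_pos E
    have : 0 < s - 1 := by linarith
    positivity) hb.1
  rw [ZZ_eq E hs1 r hpos hr]
  exact ⟨ENNReal.ofReal_le_ofReal hb.1, ENNReal.ofReal_le_ofReal hb.2⟩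

/-- The Riemann version. -/
lemma RZ_bounds : 
    ∀ᶠ s in 𝓝[>] (1 : ℝ), ENNReal.ofReal (0.9 / (s - 1)) ≤ ∑' n : ℕ, ww s n ∧
      ∑' n : ℕ, ww s n ≤ ENNReal.ofReal (1.1 / (s - 1)) := by
  have h := tendsto_sub_mul_tsum_nat_rpow
  filter_upwards [tendsto_squeeze one_pos h, self_mem_nhdsWithin] with s hb hs1
  have hs1 : 1 < s := by simpa using hs1
  have : ∑' n : ℕ, ww s n = ENNReal.ofReal (∑' n : ℕ, 1 / (n : ℝ) ^ s) := by
    rw [ENNReal.ofReal_tsum_of_nonneg (fun n => by positivity) (Real.summable_one_div_nat_rpow.mpr hs1)]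
    refine tsum_congr fun n => ?_
    unfold ww
    rw [Real.rpow_neg (by positivity), one_div]
  rw [this]
  simp only [mul_one] at hb
  exact ⟨ENNReal.ofReal_le_ofReal hb.1, ENNReal.ofReal_le_ofReal hb.2⟩

lemma ww_convex {s : ℝ} (hs : 1 < s) (n : ℕ) :
    ww s n ≤ ww (1 + 2 * (s - 1)) n + ENNReal.ofReal (s - 1) * (ENNReal.ofReal (Real.log n) * ww s n) := by
  rcases Nat.eq_zero_or_pos n with rfl | hn
  · rw [ww_zero hs]; simp
  unfold ww
  have hl : 0 ≤ Real.log n := Real.log_natCast_nonneg n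
  rw [← ENNReal.ofReal_mul hl, ← ENNReal.ofReal_mul (by linarith), ← ENNReal.ofReal_add (by positivity)
    (by have : 0 ≤ s - 1 := by linarith
        positivity)]
  apply ENNReal.ofReal_le_ofReal
  have hn' : (0:ℝ) < n := by exact_mod_cast hn
  have : (n:ℝ) ^ (-(1 + 2 * (s - 1))) = (n:ℝ)^(-s) * Real.exp (-((s-1) * Real.log n)) := by
    rw [Real.rpow_def_of_pos hn', Real.rpow_def_of_pos hn', ← Real.exp_add]
    congr 1; ring
  rw [this]
  have h3 := Real.add_one_le_exp (-((s-1) * Real.log n))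
  have h4 : 0 < (n:ℝ)^(-s) := by positivity
  nlinarith

lemma ww_log {s : ℝ} (hs : 1 < s) (n : ℕ) :
    ENNReal.ofReal ((s - 1) / 2) * (ENNReal.ofReal (Real.log n) * ww s n) ≤ ww (1 + (s - 1) / 2) n := by
  rcases Nat.eq_zero_or_pos n with rfl | hn
  · rw [ww_zero hs]; simp
  unfold ww
  have hl : 0 ≤ Real.log n := Real.log_natCast_nonneg n
  rw [← ENNReal.ofReal_mul hl, ← ENNReal.ofReal_mul (by linarith)]
  apply ENNReal.ofReal_le_ofReal
  have hn' : (0:ℝ) < n := by exact_mod_cast hn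
  have : (n:ℝ) ^ (-(1 + (s - 1)/2)) = (n:ℝ)^(-s) * Real.exp (((s-1)/2 * Real.log n)) := by
    rw [Real.rpow_def_of_pos hn', Real.rpow_def_of_pos hn', ← Real.exp_add]
    congr 1; ring
  rw [this]
  have h3 := Real.add_one_le_exp (((s-1)/2 * Real.log n))
  have h4 : 0 < (n:ℝ)^(-s) := by positivity
  nlinarith

lemma RL_bound : ∀ᶠ s in 𝓝[>] (1 : ℝ), 
    ∑' n : ℕ, ENNReal.ofReal (Real.log n) * ww s n ≤ ENNReal.ofReal (5 / (s - 1)) * ∑' n : ℕ, ww s n := by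
  have ht : Tendsto (fun s : ℝ => 1 + (s - 1) / 2) (𝓝[>] 1) (𝓝[>] 1) := by
    apply tendsto_nhdsWithin_of_tendsto_nhds_of_eventually_within
    · have : Continuous (fun s : ℝ => 1 + (s - 1) / 2) := by fun_prop
      have := this.tendsto 1
      simp only [sub_self, zero_div, add_zero] at this
      exact this.mono_left nhdsWithin_le_nhds
    · filter_upwards [self_mem_nhdsWithin] with s hs
      simp only [Set.mem_Ioi] at hs ⊢; linarith
  filter_upwards [RZ_bounds, ht.eventually RZ_bounds, self_mem_nhdsWithin] with s h1 h2 hs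
  have hs : 1 < s := by simpa using hs
  have h3 : ENNReal.ofReal ((s - 1) / 2) * ∑' n : ℕ, ENNReal.ofReal (Real.log n) * ww s n
      ≤ ∑' n : ℕ, ww (1 + (s - 1)/2) n := by
    rw [← ENNReal.tsum_mul_left]
    exact ENNReal.tsum_le_tsum fun n => ww_log hs n
  have hd : 0 < s - 1 := by linarith
  have h4 := h3.trans h2.2
  have h5 : ∑' n : ℕ, ENNReal.ofReal (Real.log n) * ww s n ≤ ENNReal.ofReal (4.4 / (s-1) / (s - 1)) := by
    have : ENNReal.ofReal (2 / (s - 1)) * ENNReal.ofReal ((s-1)/2) = 1 := by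
      rw [← ENNReal.ofReal_mul (by positivity)]
      rw [show 2 / (s-1) * ((s-1)/2) = 1 by field_simp]; simp
    calc _ = ENNReal.ofReal (2 / (s - 1)) * (ENNReal.ofReal ((s - 1) / 2) * ∑' n : ℕ, ENNReal.ofReal (Real.log n) * ww s n) := by
            rw [← mul_assoc, this, one_mul]
      _ ≤ ENNReal.ofReal (2 / (s - 1)) * ENNReal.ofReal (1.1 / (1 + (s - 1) / 2 - 1)) := by gcongr
      _ = _ := by
        rw [← ENNReal.ofReal_mul (by positivity)]
        congr 1; rw [show 1 + (s - 1) / 2 - 1 = (s - 1) / 2 by ring]; field_simp; norm_num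
  calc _ ≤ _ := h5
    _ ≤ ENNReal.ofReal (5 / (s - 1)) * ENNReal.ofReal (0.9 / (s - 1)) := by
      rw [← ENNReal.ofReal_mul (by positivity)]
      apply ENNReal.ofReal_le_ofReal
      rw [div_div, div_mul_div_comm]
      gcongr; norm_num
    _ ≤ _ := by gcongr; exact h1.1

lemma LL_bound (E : Type*) [Field E] [NumberField E] : ∃ κ : ℝ, 0 < κ ∧
    ∀ᶠ s in 𝓝[>] (1 : ℝ), ENNReal.ofReal (0.3 / (s - 1)) * ZZ E s ≤ LL E s ∧ ZZ E s ≤ ENNReal.ofReal (1.1 * κ / (s - 1))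
      ∧ ZZ E s ≠ 0 := by
  obtain ⟨κ, hκ, hb⟩ := ZZ_bounds E
  refine ⟨κ, hκ, ?_⟩
  have ht : Tendsto (fun s : ℝ => 1 + 2 * (s - 1)) (𝓝[>] 1) (𝓝[>] 1) := by
    apply tendsto_nhdsWithin_of_tendsto_nhds_of_eventually_within
    · have : Continuous (fun s : ℝ => 1 + 2 * (s - 1)) := by fun_prop
      have := this.tendsto 1
      simp only [sub_self, mul_zero, add_zero] at this
      exact this.mono_left nhdsWithin_le_nhds
    · filter_upwards [self_mem_nhdsWithin] with s hs
      simp only [Set.mem_Ioi] at hs ⊢; linarith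
  filter_upwards [hb, ht.eventually hb, self_mem_nhdsWithin] with s h1 h2 hs
  have hs : 1 < s := by simpa using hs
  have hd : 0 < s - 1 := by linarith
  refine ⟨?_, h1.2, fun h0 => ?_⟩
  · have h3 : ZZ E s ≤ ZZ E (1 + 2 * (s - 1)) + ENNReal.ofReal (s - 1) * LL E s := by
      unfold ZZ LL
      rw [← ENNReal.tsum_mul_left, ← ENNReal.tsum_add]
      exact ENNReal.tsum_le_tsum fun n => ww_convex hs _
    have h4 := h1.1.trans (h3.trans (add_le_add_left h2.2 _))
    have h5 : ENNReal.ofReal (0.35 * κ / (s - 1)) ≤ ENNReal.ofReal (s - 1) * LL E s := by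
      have e : 0.9 * κ / (s - 1) = 1.1 * κ / (1 + 2 * (s - 1) - 1) + 0.35 * κ / (s - 1) := by
        rw [show 1 + 2 * (s - 1) - 1 = 2 * (s - 1) by ring]; field_simp; norm_num
      rw [e, ENNReal.ofReal_add (by rw [show 1 + 2 * (s - 1) - 1 = 2 * (s - 1) by ring]; positivity) (by positivity)] at h4
      exact (ENNReal.add_le_add_iff_left ENNReal.ofReal_ne_top).mp h4
    have : ENNReal.ofReal (1 / (s - 1)) * ENNReal.ofReal ((s-1)) = 1 := by
      rw [← ENNReal.ofReal_mul (by positivity)]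
      rw [show 1 / (s-1) * ((s-1)) = 1 by field_simp]; simp
    calc _ ≤ ENNReal.ofReal (0.3 / (s - 1)) * ENNReal.ofReal (1.1 * κ / (s - 1)) := by gcongr; exact h1.2
      _ ≤ ENNReal.ofReal (1 / (s - 1)) * ENNReal.ofReal (0.35 * κ / (s - 1)) := by
        rw [← ENNReal.ofReal_mul (by positivity), ← ENNReal.ofReal_mul (by positivity)]
        apply ENNReal.ofReal_le_ofReal
        rw [div_mul_div_comm, div_mul_div_comm]
        gcongr ?_ / _
        nlinarith
      _ ≤ ENNReal.ofReal (1 / (s - 1)) * (ENNReal.ofReal (s - 1) * LL E s) := by gcongr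
      _ = _ := by rw [← mul_assoc, this, one_mul]
  · have := h1.1
    rw [h0] at this
    simp only [nonpos_iff_eq_zero, ENNReal.ofReal_eq_zero] at this
    have : 0 < 0.9 * κ / (s - 1) := by positivity
    linarith

open Classical in
noncomputable def LamT (E : Type*) [Field E] [NumberField E] (s : ℝ) (P : Ideal (𝓞 E)) (k : ℕ) : ℝ≥0∞ :=
  if Prime P then ENNReal.ofReal (Real.log (Ideal.absNorm P)) * ww s (Ideal.absNorm P ^ (k + 1)) else 0

open Classical in
lemma log_norm_le (E : Type*) [Field E] [NumberField E] (I : Ideal (𝓞 E)) (hI : I ≠ ⊥) :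
    ENNReal.ofReal (Real.log (Ideal.absNorm I)) ≤ ∑' P : Ideal (𝓞 E), ∑' k : ℕ,
      if Prime P ∧ P ^ (k + 1) ∣ I then ENNReal.ofReal (Real.log (Ideal.absNorm P)) else 0 := by
  set M := UniqueFactorizationMonoid.normalizedFactors I with hM
  have hprod : M.prod = I := by
    have := UniqueFactorizationMonoid.prod_normalizedFactors (show I ≠ 0 from hI)
    exact associated_iff_eq.mp this
  have h1 : Real.log (Ideal.absNorm I) = ∑ P ∈ M.toFinset, (M.count P) * Real.log (Ideal.absNorm P) := by
    conv_lhs => rw [← hprod, Finset.prod_multiset_count, map_prod, Nat.cast_prod]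
    rw [Real.log_prod]
    · refine Finset.sum_congr rfl fun P _ => ?_
      rw [map_pow, Nat.cast_pow, Real.log_pow]
    · intro P hP
      rw [map_pow, Nat.cast_pow]
      apply pow_ne_zero
      rw [Nat.cast_ne_zero, Ne, Ideal.absNorm_eq_zero_iff]
      exact (UniqueFactorizationMonoid.prime_of_normalized_factor P (Multiset.mem_toFinset.mp hP)).ne_zero
  rw [h1, ENNReal.ofReal_sum_of_nonneg (fun P _ => mul_nonneg (by positivity) (Real.log_natCast_nonneg _))]
  refine le_trans ?_ (ENNReal.sum_le_tsum M.toFinset)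
  refine Finset.sum_le_sum fun P hP => ?_
  refine le_trans ?_ (ENNReal.sum_le_tsum (Finset.range (M.count P)))
  have hPp := UniqueFactorizationMonoid.prime_of_normalized_factor P (Multiset.mem_toFinset.mp hP)
  rw [Finset.sum_congr rfl (g := fun _ => ENNReal.ofReal (Real.log (Ideal.absNorm P)))]
  · rw [Finset.sum_const, Finset.card_range, nsmul_eq_mul, ENNReal.ofReal_mul (by positivity), ENNReal.ofReal_natCast]
  · intro k hk
    rw [if_pos]
    refine ⟨hPp, ?_⟩
    rw [← hprod, ← Multiset.prod_replicate]
    apply Multiset.prod_dvd_prod_of_le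
    rw [← Multiset.le_count_iff_replicate_le]
    have := Finset.mem_range.mp hk
    omega

open Classical in
lemma LL_le (E : Type*) [Field E] [NumberField E] {s : ℝ} (hs : 1 < s) :
    LL E s ≤ ZZ E s * ∑' P : Ideal (𝓞 E), ∑' k : ℕ, LamT E s P k := by
  have h1 : LL E s ≤ ∑' I : Ideal (𝓞 E), ∑' P : Ideal (𝓞 E), ∑' k : ℕ,
      (if Prime P ∧ P ^ (k + 1) ∣ I then ENNReal.ofReal (Real.log (Ideal.absNorm P)) else 0) * ww s (Ideal.absNorm I) := by
    unfold LL
    refine ENNReal.tsum_le_tsum fun I => ?_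
    simp_rw [ENNReal.tsum_mul_right]
    by_cases hI : I = ⊥
    · simp [hI, ww_zero hs]
    · gcongr
      exact log_norm_le E I hI
  refine h1.trans ?_
  rw [ENNReal.tsum_comm, ← ENNReal.tsum_mul_left]
  refine ENNReal.tsum_le_tsum fun P => ?_
  rw [ENNReal.tsum_comm, ← ENNReal.tsum_mul_left]
  refine ENNReal.tsum_le_tsum fun k => ?_
  unfold LamT
  by_cases hP : Prime P
  swap
  · simp [hP]
  simp only [hP, true_and, if_true]
  have hinj : Function.Injective (fun J : Ideal (𝓞 E) => P ^ (k + 1) * J) :=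
    mul_right_injective₀ (pow_ne_zero _ hP.ne_zero)
  have hsupp : Function.support (fun I : Ideal (𝓞 E) => (if P ^ (k + 1) ∣ I then ENNReal.ofReal (Real.log (Ideal.absNorm P)) else 0) * ww s (Ideal.absNorm I)) ⊆ Set.range (fun J : Ideal (𝓞 E) => P ^ (k + 1) * J) := by
    intro I hI
    simp only [Function.mem_support] at hI
    by_cases hd : P ^ (k+1) ∣ I
    · obtain ⟨J, rfl⟩ := hd
      exact ⟨J, rfl⟩
    · simp [hd] at hI
  rw [← hinj.tsum_eq hsupp]
  unfold ZZ
  rw [← ENNReal.tsum_mul_right]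
  refine ENNReal.tsum_le_tsum fun J => ?_
  rw [if_pos (Dvd.intro _ rfl), map_mul, ww_mul, map_pow]
  apply le_of_eq
  ring

lemma Lam_bound (E : Type*) [Field E] [NumberField E] : 
    ∀ᶠ s in 𝓝[>] (1 : ℝ), ENNReal.ofReal (0.3 / (s - 1)) ≤ ∑' P : Ideal (𝓞 E), ∑' k : ℕ, LamT E s P k := by
  obtain ⟨κ, hκ, h⟩ := LL_bound E
  filter_upwards [h, self_mem_nhdsWithin] with s h hs
  have hs : 1 < s := by simpa using hs
  have h1 := h.1.trans (LL_le E hs)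
  rw [mul_comm] at h1
  exact (ENNReal.mul_le_mul_iff_right h.2.2 (h.2.1.trans_lt ENNReal.ofReal_lt_top).ne).mp h1

lemma exists_prime_mem {E : Type*} [Field E] [NumberField E] {P : Ideal (𝓞 E)} (hP : Prime P) :
    ∃ p : ℕ, p.Prime ∧ (p : 𝓞 E) ∈ P := by
  have hPp : P.IsPrime := Ideal.isPrime_of_prime hP
  have h0 : Ideal.absNorm P ≠ 0 := by
    rw [Ne, Ideal.absNorm_eq_zero_iff]; exact hP.ne_zero
  have h1 : ((Ideal.absNorm P : ℕ) : 𝓞 E) ∈ P := Ideal.absNorm_mem P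
  generalize Ideal.absNorm P = n at h0 h1
  induction n using Nat.recOnMul with
  | zero => exact absurd rfl h0
  | one => exact absurd ((Ideal.eq_top_iff_one _).mpr (by simpa using h1)) hPp.ne_top
  | prime p hp => exact ⟨p, hp, h1⟩
  | mul a b ha hb =>
    rw [Nat.cast_mul] at h1
    rcases hPp.mem_or_mem h1 with h | h
    · exact ha (fun h => h0 (by simp [h])) h
    · exact hb (fun h => h0 (by simp [h])) h

lemma absNorm_span_nat (E : Type*) [Field E] [NumberField E] (p : ℕ) :
    Ideal.absNorm (Ideal.span {(p : 𝓞 E)}) = p ^ Module.finrank ℚ E := by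
  rw [Ideal.absNorm_span_singleton]
  have : (p : 𝓞 E) = algebraMap ℤ (𝓞 E) p := by simp
  rw [this, Algebra.norm_algebraMap, Int.natAbs_pow, Int.natAbs_natCast, RingOfIntegers.rank]

lemma norm_eq_pow {E : Type*} [Field E] [NumberField E] {P : Ideal (𝓞 E)} (hP : Prime P) {p : ℕ}
    (hp : p.Prime) (hpP : (p : 𝓞 E) ∈ P) :
    ∃ f : ℕ, 1 ≤ f ∧ f ≤ Module.finrank ℚ E ∧ Ideal.absNorm P = p ^ f := by
  have h1 : Ideal.absNorm P ∣ p ^ Module.finrank ℚ E := by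
    rw [← absNorm_span_nat]
    apply Ideal.absNorm_dvd_absNorm_of_le
    simpa [Ideal.span_singleton_le_iff_mem] using hpP
  obtain ⟨f, hf, he⟩ := (Nat.dvd_prime_pow hp).mp h1
  refine ⟨f, ?_, hf, he⟩
  rcases Nat.eq_zero_or_pos f with rfl | h
  · rw [pow_zero, Ideal.absNorm_eq_one_iff] at he
    exact absurd he (Ideal.isPrime_of_prime hP).ne_top
  · exact h

lemma card_primes_over {E : Type*} [Field E] [NumberField E] {p : ℕ}
    (hp : p.Prime) (t : Finset (Ideal (𝓞 E))) (ht : ∀ P ∈ t, Prime P ∧ (p : 𝓞 E) ∈ P) :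
    t.card ≤ Module.finrank ℚ E := by
  have h1 : ∏ P ∈ t, P ∣ Ideal.span {(p : 𝓞 E)} := by
    apply Finset.prod_primes_dvd
    · intro P hP; exact (ht P hP).1
    · intro P hP
      rw [Ideal.dvd_span_singleton]
      exact (ht P hP).2
  have h2 : Ideal.absNorm (∏ P ∈ t, P) ∣ p ^ Module.finrank ℚ E := by
    rw [← absNorm_span_nat]
    exact map_dvd Ideal.absNorm h1
  have h3 : p ^ t.card ≤ Ideal.absNorm (∏ P ∈ t, P) := by
    rw [map_prod, ← Finset.prod_const]
    refine Finset.prod_le_prod' fun P hP => ?_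
    obtain ⟨f, hf, -, he⟩ := norm_eq_pow (ht P hP).1 hp (ht P hP).2
    rw [he]
    exact Nat.le_self_pow (by omega) p
  exact (Nat.pow_le_pow_iff_right hp.one_lt).mp (h3.trans (Nat.le_of_dvd (pow_pos hp.pos _) h2))

noncomputable def tailp (p : ℕ) : ℝ≥0∞ := ENNReal.ofReal (8 * (p : ℝ) ^ (-(3/2) : ℝ))

lemma tail_aux {p : ℕ} (hp : p.Prime) :
    ∑' e : ℕ, ENNReal.ofReal (Real.log p) * ENNReal.ofReal ((p : ℝ) ^ (-((e : ℝ) + 2))) ≤ tailp p := by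
  have hp1 : (2 : ℝ) ≤ p := by exact_mod_cast hp.two_le
  have hp0 : (0 : ℝ) < p := by linarith
  have hl : 0 ≤ Real.log p := Real.log_natCast_nonneg p
  have hlog : Real.log p ≤ 2 * (p : ℝ) ^ (1/2 : ℝ) := by
    have := Real.log_le_rpow_div hp0.le (show (0:ℝ) < 1/2 by norm_num)
    linarith
  have hterm : ∀ e : ℕ, (p : ℝ) ^ (-((e : ℝ) + 2)) = (p:ℝ)^(-2 : ℝ) * ((p : ℝ)⁻¹) ^ e := by
    intro e
    rw [neg_add, Real.rpow_add hp0, mul_comm, Real.rpow_neg hp0.le (e : ℝ), Real.rpow_natCast, inv_pow]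
  have hr : (p : ℝ)⁻¹ ≤ 1/2 := by rw [one_div]; exact inv_anti₀ (by norm_num) hp1
  have hr0 : 0 ≤ (p : ℝ)⁻¹ := by positivity
  have hsum : Summable (fun e : ℕ => (p:ℝ)^(-2 : ℝ) * ((p : ℝ)⁻¹) ^ e) :=
    (summable_geometric_of_lt_one hr0 (by linarith)).mul_left _
  rw [ENNReal.tsum_mul_left]
  simp_rw [hterm]
  rw [← ENNReal.ofReal_tsum_of_nonneg (fun e => by positivity) hsum, tsum_mul_left,
    tsum_geometric_of_lt_one hr0 (by linarith), ← ENNReal.ofReal_mul hl]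
  unfold tailp
  apply ENNReal.ofReal_le_ofReal
  have h5 : (1 - (p : ℝ)⁻¹)⁻¹ ≤ 2 := by
    rw [inv_le_comm₀ (by linarith) (by norm_num)]
    linarith
  have h6 : (p : ℝ) ^ (-(3/2) : ℝ) = (p : ℝ) ^ (1/2 : ℝ) * (p : ℝ) ^ (-2 : ℝ) := by
    rw [← Real.rpow_add hp0]; norm_num
  have h7 : 0 < (p : ℝ) ^ (-2 : ℝ) := by positivity
  have h8 : 0 < (p : ℝ) ^ (1/2 : ℝ) := by positivity
  calc Real.log p * ((p : ℝ) ^ (-2 : ℝ) * (1 - (p : ℝ)⁻¹)⁻¹) 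
      ≤ (2 * (p : ℝ) ^ (1/2 : ℝ)) * ((p : ℝ) ^ (-2 : ℝ) * 2) := by
        have : 0 ≤ (1 - (p : ℝ)⁻¹)⁻¹ := inv_nonneg.mpr (by linarith)
        gcongr
    _ ≤ _ := by rw [h6]; nlinarith [mul_pos h7 h8]

lemma tail_finite : ∑' p : ℕ, tailp p ≠ ⊤ := by
  unfold tailp
  have hs : Summable (fun p : ℕ => 8 * (p : ℝ) ^ (-(3/2) : ℝ)) :=
    (Real.summable_nat_rpow.mpr (by norm_num)).mul_left _
  rw [← ENNReal.ofReal_tsum_of_nonneg (fun e => by positivity) hs]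
  exact ENNReal.ofReal_ne_top

lemma hom_of_norm_prime {E : Type*} [Field E] [NumberField E] {P : Ideal (𝓞 E)} {p : ℕ}
    (hp : p.Prime) (h : Ideal.absNorm P = p) : Nonempty (𝓞 E →+* ZMod p) := by
  have hc : Nat.card (𝓞 E ⧸ P) = p := by
    rw [← h, Ideal.absNorm_apply, Submodule.cardQuot_apply]
  have : Finite (𝓞 E ⧸ P) := Nat.finite_of_card_ne_zero (by rw [hc]; exact hp.ne_zero)
  have := Fintype.ofFinite (𝓞 E ⧸ P)
  rw [Nat.card_eq_fintype_card] at hc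
  exact ⟨((ZMod.ringEquivOfPrime _ hp hc).symm : (𝓞 E ⧸ P) →+* ZMod p).comp (Ideal.Quotient.mk P)⟩

open Classical in
noncomputable def mainp (E : Type*) [Field E] [NumberField E] (s : ℝ) (p : ℕ) : ℝ≥0∞ :=
  if p.Prime ∧ Nonempty (𝓞 E →+* ZMod p) then ENNReal.ofReal (Real.log p) * ww s p else 0

lemma ww_le_of (s : ℝ) (hs : 1 < s) (p : ℕ) (hp : p.Prime) (m : ℕ) : 
    ww s (p ^ m) ≤ ENNReal.ofReal ((p:ℝ) ^ (-(m:ℝ))) := by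
  unfold ww
  apply ENNReal.ofReal_le_ofReal
  have hp1 : (1 : ℝ) ≤ p := by exact_mod_cast hp.one_lt.le
  rw [Nat.cast_pow, ← Real.rpow_natCast, ← Real.rpow_mul (by positivity)]
  apply Real.rpow_le_rpow_of_exponent_le hp1
  have : (0:ℝ) ≤ m := by positivity
  nlinarith

lemma LamT_le {E : Type*} [Field E] [NumberField E] {P : Ideal (𝓞 E)} (hP : Prime P) {p : ℕ}
    (hp : p.Prime) (hpP : (p : 𝓞 E) ∈ P) {s : ℝ} (hs : 1 < s) :
    ∑' k : ℕ, LamT E s P k ≤ mainp E s p + Module.finrank ℚ E * tailp p := by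
  obtain ⟨f, hf1, hfD, hN⟩ := norm_eq_pow hP hp hpP
  have hl : 0 ≤ Real.log p := Real.log_natCast_nonneg p
  have ht := tail_aux hp
  have hD1 : 1 ≤ Module.finrank ℚ E := hf1.trans hfD
  unfold LamT
  simp only [hP, if_true, hN]
  rcases Nat.eq_or_lt_of_le hf1 with rfl | hf2
  · rw [tsum_eq_zero_add' ENNReal.summable]
    have hm : mainp E s p = ENNReal.ofReal (Real.log p) * ww s p := by
      unfold mainp
      rw [if_pos ⟨hp, hom_of_norm_prime hp (by rw [hN, pow_one])⟩]
    rw [hm]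
    simp only [pow_one, zero_add]
    gcongr
    calc _ ≤ tailp p := by
          refine le_trans (ENNReal.tsum_le_tsum fun e => ?_) ht
          gcongr
          refine (ww_le_of s hs p hp _).trans ?_
          apply le_of_eq; congr 3; push_cast; ring
      _ = 1 * tailp p := (one_mul _).symm
      _ ≤ _ := by gcongr; exact_mod_cast hD1
  · refine le_trans ?_ le_add_self
    refine le_trans ?_ (mul_le_mul_right ht _)
    rw [← ENNReal.tsum_mul_left]
    have hinj : Function.Injective (fun k : ℕ => f * (k + 1) - 2) := by
      intro a b hab
      simp only at hab
      have h1 : 2 ≤ f * (a + 1) := by nlinarith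
      have h2 : 2 ≤ f * (b + 1) := by nlinarith
      have h3 : f * (a + 1) = f * (b + 1) := by omega
      have := Nat.eq_of_mul_eq_mul_left (by omega) h3
      omega
    refine le_trans ?_ (ENNReal.tsum_comp_le_tsum_of_injective hinj _)
    refine ENNReal.tsum_le_tsum fun k => ?_
    have h1 : 2 ≤ f * (k + 1) := by nlinarith
    rw [← mul_assoc, ← pow_mul, Nat.cast_pow, Real.log_pow, ENNReal.ofReal_mul (by positivity), ENNReal.ofReal_natCast]
    gcongr
    refine (ww_le_of s hs p hp _).trans ?_
    apply le_of_eq; congr 3; push_cast [Nat.cast_sub h1]; ring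

open Classical in
lemma Lam_le (E : Type*) [Field E] [NumberField E] {s : ℝ} (hs : 1 < s) :
    ∑' P : Ideal (𝓞 E), ∑' k : ℕ, LamT E s P k ≤
      ∑' p : ℕ, Module.finrank ℚ E * (mainp E s p + Module.finrank ℚ E * tailp p) := by
  calc ∑' P : Ideal (𝓞 E), ∑' k : ℕ, LamT E s P k ≤ ∑' P : Ideal (𝓞 E), ∑' p : ℕ,
      if p.Prime ∧ Prime P ∧ (p : 𝓞 E) ∈ P then mainp E s p + Module.finrank ℚ E * tailp p else 0 := by
        refine ENNReal.tsum_le_tsum fun P => ?_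
        by_cases hP : Prime P
        · obtain ⟨p, hp, hpP⟩ := exists_prime_mem hP
          refine le_trans ?_ (ENNReal.le_tsum p)
          rw [if_pos ⟨hp, hP, hpP⟩]
          exact LamT_le hP hp hpP hs
        · simp [LamT, hP]
    _ = ∑' p : ℕ, ∑' P : Ideal (𝓞 E),
      if p.Prime ∧ Prime P ∧ (p : 𝓞 E) ∈ P then mainp E s p + Module.finrank ℚ E * tailp p else 0 := ENNReal.tsum_comm
    _ ≤ _ := by
      refine ENNReal.tsum_le_tsum fun p => ?_
      rw [ENNReal.tsum_eq_iSup_sum]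
      refine iSup_le fun t => ?_
      rw [← Finset.sum_filter, Finset.sum_const, nsmul_eq_mul]
      gcongr
      by_cases hp : p.Prime
      · exact card_primes_over hp _ (fun P hP => (Finset.mem_filter.mp hP).2.2)
      · simp [hp]

open Classical in
lemma prime_sum_bound (E : Type*) [Field E] [NumberField E] (B : ℕ) : ∃ C : ℝ≥0∞, C ≠ ⊤ ∧
    ∀ᶠ s in 𝓝[>] (1 : ℝ), ENNReal.ofReal (0.3 / (s - 1)) ≤ C + Module.finrank ℚ E *
      ∑' p : ℕ, if B < p then mainp E s p else 0 := by
  set D : ℝ≥0∞ := (Module.finrank ℚ E : ℝ≥0∞) with hD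
  have hDt : D ≠ ⊤ := ENNReal.natCast_ne_top _
  refine ⟨D * (∑ p ∈ Finset.range (B+1), ENNReal.ofReal (Real.log p)) + D * (D * ∑' p : ℕ, tailp p), ?_, ?_⟩
  · refine ENNReal.add_ne_top.mpr ⟨ENNReal.mul_ne_top hDt ?_, ENNReal.mul_ne_top hDt (ENNReal.mul_ne_top hDt tail_finite)⟩
    rw [ENNReal.sum_ne_top]
    intro p _; exact ENNReal.ofReal_ne_top
  filter_upwards [Lam_bound E, self_mem_nhdsWithin] with s h hs
  have hs : 1 < s := by simpa using hs
  refine (h.trans (Lam_le E hs)).trans ?_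
  rw [ENNReal.tsum_mul_left, ENNReal.tsum_add, ENNReal.tsum_mul_left]
  rw [mul_add, add_right_comm]
  gcongr
  rw [← mul_add]
  gcongr
  have : ∑ p ∈ Finset.range (B+1), ENNReal.ofReal (Real.log p) = ∑' p : ℕ, if B < p then 0 else ENNReal.ofReal (Real.log p) := by
    rw [tsum_eq_sum (s := Finset.range (B+1))]
    · refine Finset.sum_congr rfl fun p hp => ?_
      have := Finset.mem_range.mp hp
      rw [if_neg (by omega)]
    · intro p hp
      rw [Finset.mem_range] at hp
      rw [if_pos (by omega)]
  rw [this, ← ENNReal.tsum_add]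
  refine ENNReal.tsum_le_tsum fun p => ?_
  split_ifs with hb
  · simp
  · rw [add_zero]
    unfold mainp
    split_ifs with h1
    · have h2 : ww s p ≤ 1 := by
        have := ww_le_of s hs p h1.1 1
        rw [pow_one] at this
        refine this.trans ?_
        rw [ENNReal.ofReal_le_one]
        apply Real.rpow_le_one_of_one_le_of_nonpos
        · exact_mod_cast h1.1.one_lt.le
        · simp
      calc _ ≤ ENNReal.ofReal (Real.log p) * 1 := by gcongr
        _ = _ := mul_one _
    · simp

lemma cyc_dvd (E : Type*) [Field E] [NumberField E] {j : ℕ} {ζ : E} (hζ : IsPrimitiveRoot ζ (2 ^ (j + 1)))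
    {p : ℕ} (hp : p.Prime) (hp2 : 2 < p) (φ : 𝓞 E →+* ZMod p) : 2 ^ (j + 1) ∣ p - 1 := by
  have := Fact.mk hp
  have hi : IsIntegral ℤ ζ := hζ.isIntegral (by positivity)
  set z : 𝓞 E := ⟨ζ, hi⟩ with hz
  have h1 : z ^ (2 ^ j) = -1 := by
    apply RingOfIntegers.ext
    have h2 : IsPrimitiveRoot (ζ ^ (2 ^ j)) 2 := hζ.pow (by positivity) (by rw [pow_succ])
    change algebraMap (𝓞 E) E (z ^ _) = algebraMap (𝓞 E) E (-1)
    rw [map_pow, map_neg, map_one]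
    exact h2.eq_neg_one_of_two_right
  have h3 : (φ z) ^ (2 ^ j) = -1 := by rw [← map_pow, h1]; simp
  have hne : (-1 : ZMod p) ≠ 1 := by
    have : Fact (2 < p) := ⟨hp2⟩
    exact ZMod.neg_one_ne_one
  have h4 : orderOf (φ z) = 2 ^ (j + 1) := by
    apply orderOf_eq_prime_pow
    · rw [h3]; exact hne
    · rw [pow_succ, pow_mul, h3]; simp
  rw [← h4]
  apply ZMod.orderOf_dvd_card_sub_one
  intro h0
  rw [h0, zero_pow (by positivity)] at h3
  have : (1 : ZMod p) = 0 := by linear_combination h3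
  exact one_ne_zero this

lemma cyc_rank (F : Type*) [Field F] [NumberField F] (j : ℕ) :
    Module.finrank ℚ (CyclotomicField (2 ^ (j + 1)) F) ≤ Module.finrank ℚ F * 2 ^ j := by
  rw [← Module.finrank_mul_finrank ℚ F (CyclotomicField (2 ^ (j + 1)) F)]
  gcongr
  have hζ := IsCyclotomicExtension.zeta_spec (2 ^ (j + 1)) F (CyclotomicField (2 ^ (j + 1)) F)
  rw [(hζ.powerBasis F).finrank, IsPrimitiveRoot.powerBasis_dim]
  have : minpoly F (IsCyclotomicExtension.zeta (2 ^ (j + 1)) F (CyclotomicField (2 ^ (j + 1)) F)) ∣ 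
    Polynomial.cyclotomic (2 ^ (j + 1)) F := by
    apply minpoly.dvd
    rw [Polynomial.aeval_def, ← Polynomial.eval_map, Polynomial.map_cyclotomic]
    exact hζ.isRoot_cyclotomic (by positivity)
  refine (Polynomial.natDegree_le_of_dvd this (Polynomial.cyclotomic_ne_zero _ _)).trans ?_
  rw [Polynomial.natDegree_cyclotomic, Nat.totient_prime_pow_succ Nat.prime_two]
  simp

def SS (F : Type*) [Field F] [NumberField F] (B p : ℕ) : Prop :=
  p.Prime ∧ B < p ∧ Nonempty (𝓞 F →+* ZMod p)

open Classical in
lemma j_bound (F : Type*) [Field F] [NumberField F] (B : ℕ) (hB : 2 ≤ B) (j : ℕ) : ∃ C : ℝ≥0∞, C ≠ ⊤ ∧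
    ∀ᶠ s in 𝓝[>] (1 : ℝ), ENNReal.ofReal (0.3 / (s - 1)) ≤ C + Module.finrank ℚ F * (2 ^ j *
      ∑' p : ℕ, if SS F B p ∧ 2 ^ (j + 1) ∣ p - 1 then ENNReal.ofReal (Real.log p) * ww s p else 0) := by
  have : NumberField (CyclotomicField (2 ^ (j + 1)) F) := 
    IsCyclotomicExtension.numberField {2 ^ (j + 1)} F _
  obtain ⟨C, hC, h⟩ := prime_sum_bound (CyclotomicField (2 ^ (j + 1)) F) B
  refine ⟨C, hC, ?_⟩
  filter_upwards [h] with s h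
  refine h.trans ?_
  refine add_le_add le_rfl ?_
  rw [← mul_assoc]
  refine mul_le_mul' (by exact_mod_cast cyc_rank F j) (ENNReal.tsum_le_tsum fun p => ?_)
  · split_ifs with hb hS
    · unfold mainp
      split_ifs
      · exact le_rfl
      · simp
    · unfold mainp
      rw [if_neg]
      rintro ⟨hp, ⟨φ⟩⟩
      apply hS
      refine ⟨⟨hp, hb, ⟨φ.comp (algebraMap (𝓞 F) (𝓞 (CyclotomicField (2 ^ (j + 1)) F)))⟩⟩, ?_⟩
      exact cyc_dvd _ (IsCyclotomicExtension.zeta_spec (2 ^ (j + 1)) F (CyclotomicField (2 ^ (j + 1)) F)) hp (by omega) φ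
    · simp
    · simp

lemma ww_gcd {s : ℝ} (hs : 1 < s) {p J : ℕ} (hp : p.Prime) :
    ((Nat.gcd (p - 1) (2 ^ J) : ℕ) : ℝ≥0∞) * ww s p ≤ ww s ((p - 1) / Nat.gcd (p - 1) (2 ^ J)) := by
  set g := Nat.gcd (p - 1) (2 ^ J) with hg
  have hg0 : 0 < g := Nat.gcd_pos_of_pos_right _ (by positivity)
  have hgd : g ∣ p - 1 := Nat.gcd_dvd_left _ _
  obtain ⟨m, hm⟩ := hgd
  have h1 := hp.two_le
  rw [hm, Nat.mul_div_cancel_left _ hg0]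
  have hm0 : 0 < m := by
    rcases Nat.eq_zero_or_pos m with rfl | h
    · omega
    · exact h
  have hle : g * m ≤ p := by omega
  unfold ww
  rw [← ENNReal.ofReal_natCast, ← ENNReal.ofReal_mul (by positivity)]
  apply ENNReal.ofReal_le_ofReal
  have hgr : (1:ℝ) ≤ g := by exact_mod_cast hg0
  have hmr : (0:ℝ) < m := by exact_mod_cast hm0
  have h2 : (p : ℝ) ^ (-s) ≤ ((g:ℝ) * m) ^ (-s) := by
    apply Real.rpow_le_rpow_of_nonpos (by positivity) (by exact_mod_cast hle) (by linarith)
  rw [Real.mul_rpow (by positivity) (by positivity)] at h2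
  have h3 : (g:ℝ) * (g:ℝ) ^ (-s) ≤ 1 := by
    have : (g:ℝ) * (g:ℝ) ^ (-s) = (g:ℝ) ^ (1 + -s) := by
      rw [Real.rpow_add (by linarith), Real.rpow_one]
    rw [this]
    exact Real.rpow_le_one_of_one_le_of_nonpos hgr (by linarith)
  have h4 : 0 < (m:ℝ) ^ (-s) := by positivity
  calc (g:ℝ) * (p:ℝ)^(-s) ≤ g * ((g:ℝ)^(-s) * (m:ℝ)^(-s)) := by gcongr
    _ = (g * (g:ℝ)^(-s)) * (m:ℝ)^(-s) := by ring
    _ ≤ 1 * (m:ℝ)^(-s) := by gcongr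
    _ = _ := one_mul _

lemma gcd_lower (n J : ℕ) (hn : 0 < n) : ∑ j ∈ Finset.range J, (if 2 ^ (j + 1) ∣ n then 2 ^ j else 0) ≤ Nat.gcd n (2 ^ J) := by
  suffices h : ∑ j ∈ Finset.range J, (if 2 ^ (j + 1) ∣ n then 2 ^ j else 0) + 1 ≤ Nat.gcd n (2 ^ J) by omega
  induction J with
  | zero => simp
  | succ J ih =>
    rw [Finset.sum_range_succ]
    split_ifs with h
    · have h1 : Nat.gcd n (2 ^ (J + 1)) = 2 ^ (J + 1) := Nat.gcd_eq_right h
      have h2 : Nat.gcd n (2 ^ J) ≤ 2 ^ J := Nat.le_of_dvd (by positivity) (Nat.gcd_dvd_right _ _)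
      rw [h1, pow_succ]
      omega
    · have h2 : Nat.gcd n (2 ^ J) ≤ Nat.gcd n (2 ^ (J + 1)) :=
        Nat.le_of_dvd (Nat.gcd_pos_of_pos_left _ hn) (Nat.gcd_dvd_gcd_of_dvd_right _ (pow_dvd_pow _ (by omega)))
      omega

open Classical in
theorem NT_main (F : Type*) [Field F] [NumberField F] (A B : ℕ) :
    ∃ (P : Finset ℕ) (T : ℕ), 0 < T ∧ (∀ p ∈ P, p.Prime ∧ B < p ∧ p - 1 ∣ T ∧ Nonempty (𝓞 F →+* ZMod p)) ∧
      T ^ A < ∏ p ∈ P, p := by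
  wlog hB : 2 ≤ B generalizing B
  · obtain ⟨P, T, h1, h2, h3⟩ := this 2 le_rfl
    exact ⟨P, T, h1, fun p hp => ⟨(h2 p hp).1, by have := (h2 p hp).2.1; omega, (h2 p hp).2.2⟩, h3⟩
  by_contra hcon
  push Not at hcon
  -- log bound
  have hlog : ∀ T : ℕ, 0 < T → ∑' p : ℕ, (if SS F B p ∧ p - 1 ∣ T then ENNReal.ofReal (Real.log p) else 0) ≤ 
      A * ENNReal.ofReal (Real.log T) := by
    intro T hT
    rw [tsum_eq_sum (s := Finset.range (T + 2))]
    · rw [← Finset.sum_filter]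
      have h1 := hcon ((Finset.range (T + 2)).filter (fun p => SS F B p ∧ p - 1 ∣ T)) T hT (by
        intro p hp
        obtain ⟨-, ⟨h1, h2, h3⟩, h4⟩ := Finset.mem_filter.mp hp
        exact ⟨h1, h2, h4, h3⟩)
      rw [← ENNReal.ofReal_sum_of_nonneg (fun p _ => Real.log_natCast_nonneg p), ← ENNReal.ofReal_natCast,
        ← ENNReal.ofReal_mul (by positivity)]
      apply ENNReal.ofReal_le_ofReal
      rw [← Real.log_prod (fun p hp => by
        have := (Finset.mem_filter.mp hp).2.1.1.pos
        positivity), ← Real.log_pow]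
      apply Real.log_le_log
      · apply Finset.prod_pos
        intro p hp
        have := (Finset.mem_filter.mp hp).2.1.1.pos
        positivity
      · have h2 : ((∏ p ∈ Finset.range (T + 2) with SS F B p ∧ p - 1 ∣ T, p : ℕ) : ℝ) ≤ ((T ^ A : ℕ) : ℝ) :=
          Nat.cast_le.mpr h1
        rw [Nat.cast_prod, Nat.cast_pow] at h2
        exact h2
    · intro p hp
      rw [Finset.mem_range] at hp
      rw [if_neg]
      rintro ⟨-, h⟩
      have := Nat.le_of_dvd hT h
      omega
  set D := Module.finrank ℚ F with hD
  set J := 20 * D * A + 1 with hJ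
  choose C hC hj using j_bound F B hB
  have hall : ∀ᶠ s in 𝓝[>] (1 : ℝ), ∀ j ∈ Finset.range J, ENNReal.ofReal (0.3 / (s - 1)) ≤ C j + Module.finrank ℚ F * (2 ^ j *
      ∑' p : ℕ, if SS F B p ∧ 2 ^ (j + 1) ∣ p - 1 then ENNReal.ofReal (Real.log p) * ww s p else 0) := by
    rw [Filter.eventually_all_finset]
    intro j _; exact hj j
  set CC : ℝ≥0∞ := ∑ j ∈ Finset.range J, C j + D * (A * ENNReal.ofReal (Real.log ((2 ^ J : ℕ)))) with hCC
  have hCCt : CC ≠ ⊤ := by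
    refine ENNReal.add_ne_top.mpr ⟨?_, ENNReal.mul_ne_top (ENNReal.natCast_ne_top _)
      (ENNReal.mul_ne_top (ENNReal.natCast_ne_top _) ENNReal.ofReal_ne_top)⟩
    rw [ENNReal.sum_ne_top]
    intro j _; exact hC j
  have hfin : ∀ᶠ s in 𝓝[>] (1 : ℝ), (J : ℝ≥0∞) * ENNReal.ofReal (0.3 / (s - 1)) ≤ CC + D * (A * ENNReal.ofReal (5 / (s - 1))) := by
    filter_upwards [hall, RZ_bounds, RL_bound, self_mem_nhdsWithin] with s ha hz hl hs
    have hs : 1 < s := by simpa using hs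
    have hd : 0 < s - 1 := by linarith
    set ζ : ℝ≥0∞ := ∑' n : ℕ, ww s n with hζ
    have hζt : ζ ≠ ⊤ := (hz.2.trans_lt ENNReal.ofReal_lt_top).ne
    have hζ0 : ζ ≠ 0 := by
      intro h0
      have h1 := hz.1
      rw [h0] at h1
      simp only [nonpos_iff_eq_zero, ENNReal.ofReal_eq_zero] at h1
      have : 0 < 0.9 / (s - 1) := by positivity
      linarith
    set Y : ℝ≥0∞ := ∑ j ∈ Finset.range J, 2 ^ j *
      ∑' p : ℕ, (if SS F B p ∧ 2 ^ (j + 1) ∣ p - 1 then ENNReal.ofReal (Real.log p) * ww s p else 0) with hY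
    have h1 : (J : ℝ≥0∞) * ENNReal.ofReal (0.3 / (s - 1)) ≤ ∑ j ∈ Finset.range J, C j + D * Y := by
      have := Finset.sum_le_sum ha
      rw [Finset.sum_const, Finset.card_range, nsmul_eq_mul, Finset.sum_add_distrib, ← Finset.mul_sum] at this
      exact this
    -- upper bound of the double sum
    have h2 : ∑' k : ℕ, ∑' p : ℕ, (if SS F B p ∧ p - 1 ∣ 2 ^ J * k then ENNReal.ofReal (Real.log p) else 0) * ww s k ≤
        ζ * (A * (ENNReal.ofReal (Real.log ((2 ^ J : ℕ))) + ENNReal.ofReal (5 / (s - 1)))) := by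
      calc _ ≤ ∑' k : ℕ, A * (ENNReal.ofReal (Real.log ((2 ^ J : ℕ))) * ww s k + ENNReal.ofReal (Real.log k) * ww s k) := by
            refine ENNReal.tsum_le_tsum fun k => ?_
            rw [ENNReal.tsum_mul_right]
            rcases Nat.eq_zero_or_pos k with rfl | hk
            · simp [ww_zero hs]
            rw [← add_mul, ← mul_assoc]
            gcongr
            refine (hlog (2 ^ J * k) (by positivity)).trans ?_
            gcongr
            rw [← ENNReal.ofReal_add (Real.log_natCast_nonneg _) (Real.log_natCast_nonneg _), ← Real.log_mul (by positivity) (by positivity)]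
            push_cast
            exact le_rfl
        _ = A * (ENNReal.ofReal (Real.log ((2 ^ J : ℕ))) * ζ + ∑' k : ℕ, ENNReal.ofReal (Real.log k) * ww s k) := by
            rw [ENNReal.tsum_mul_left, ENNReal.tsum_add, ENNReal.tsum_mul_left]
        _ ≤ A * (ENNReal.ofReal (Real.log ((2 ^ J : ℕ))) * ζ + ENNReal.ofReal (5 / (s - 1)) * ζ) := by
            gcongr
        _ = _ := by ring
    -- lower bound
    have h3 : ζ * Y ≤ ∑' k : ℕ, ∑' p : ℕ, (if SS F B p ∧ p - 1 ∣ 2 ^ J * k then ENNReal.ofReal (Real.log p) else 0) * ww s k := by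
      rw [ENNReal.tsum_comm]
      have hY' : Y = ∑' p : ℕ, if SS F B p then ENNReal.ofReal (Real.log p) * (((∑ j ∈ Finset.range J, (if 2 ^ (j + 1) ∣ p - 1 then 2 ^ j else 0) : ℕ) : ℝ≥0∞) * ww s p) else 0 := by
        rw [hY]
        simp_rw [← ENNReal.tsum_mul_left]
        rw [← Summable.tsum_finsetSum (fun _ _ => ENNReal.summable)]
        refine tsum_congr fun p => ?_
        split_ifs with hS
        · push_cast
          rw [Finset.sum_mul, Finset.mul_sum]
          refine Finset.sum_congr rfl fun j _ => ?_
          simp only [hS, true_and]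
          split_ifs
          · ring
          · simp
        · simp [hS]
      rw [hY', ← ENNReal.tsum_mul_left]
      refine ENNReal.tsum_le_tsum fun p => ?_
      split_ifs with hS
      swap
      · simp
      simp only [hS, true_and]
      have hp := hS.1
      set g := Nat.gcd (p - 1) (2 ^ J) with hg
      have hg0 : 0 < g := Nat.gcd_pos_of_pos_right _ (by positivity)
      have hp1 : 0 < p - 1 := by have := hp.two_le; omega
      set m := (p - 1) / g with hm
      have hgm : g * m = p - 1 := Nat.mul_div_cancel' (Nat.gcd_dvd_left _ _)
      have hm0 : 0 < m := by
        rcases Nat.eq_zero_or_pos m with h | h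
        · rw [h] at hgm; omega
        · exact h
      have hinj : Function.Injective (fun i : ℕ => m * i) := fun a b h => Nat.eq_of_mul_eq_mul_left hm0 h
      refine le_trans ?_ (ENNReal.tsum_comp_le_tsum_of_injective hinj _)
      have hdv : ∀ i : ℕ, p - 1 ∣ 2 ^ J * (m * i) := by
        intro i
        rw [← mul_assoc]
        apply Dvd.dvd.mul_right
        rw [← hgm]
        exact mul_dvd_mul_right (Nat.gcd_dvd_right _ _) _
      simp only [hdv, if_true, ww_mul]
      have hR : ∑' i : ℕ, ENNReal.ofReal (Real.log p) * (ww s m * ww s i) =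
          ENNReal.ofReal (Real.log p) * ww s m * ζ := by
        rw [ENNReal.tsum_mul_left, ENNReal.tsum_mul_left, ← hζ, mul_assoc]
      rw [hR, mul_comm ζ]
      refine mul_le_mul' (mul_le_mul' le_rfl ?_) le_rfl
      refine le_trans ?_ (ww_gcd hs hp)
      gcongr
      exact gcd_lower _ _ hp1
    have h4 : Y ≤ A * (ENNReal.ofReal (Real.log ((2 ^ J : ℕ))) + ENNReal.ofReal (5 / (s - 1))) :=
      (ENNReal.mul_le_mul_iff_right hζ0 hζt).mp (h3.trans h2)
    refine h1.trans ?_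
    calc _ ≤ ∑ j ∈ Finset.range J, C j + D * (A * (ENNReal.ofReal (Real.log ((2 ^ J : ℕ))) + ENNReal.ofReal (5 / (s - 1)))) := by
            gcongr
      _ = _ := by rw [hCC]; ring
  -- contradiction
  have hreal : ∀ᶠ s in 𝓝[>] (1 : ℝ), (J : ℝ) * (0.3 / (s - 1)) ≤ CC.toReal + D * (A * (5 / (s - 1))) := by
    filter_upwards [hfin, self_mem_nhdsWithin] with s h hs
    have hs : 1 < s := by simpa using hs
    have hd : 0 < s - 1 := by linarith
    rw [← ENNReal.ofReal_toReal hCCt, ← ENNReal.ofReal_natCast, ← ENNReal.ofReal_natCast (n := D), ← ENNReal.ofReal_natCast (n := A),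
      ← ENNReal.ofReal_mul (by positivity), ← ENNReal.ofReal_mul (by positivity), ← ENNReal.ofReal_mul (by positivity),
      ← ENNReal.ofReal_add ENNReal.toReal_nonneg (by positivity)] at h
    exact (ENNReal.ofReal_le_ofReal_iff (by positivity)).mp h
  have hsmall : ∀ᶠ s in 𝓝[>] (1 : ℝ), s < 1 + 0.3 / (CC.toReal + 1) := by
    apply mem_nhdsWithin_of_mem_nhds
    apply Iio_mem_nhds
    have : 0 ≤ CC.toReal := ENNReal.toReal_nonneg
    have : 0 < 0.3 / (CC.toReal + 1) := by positivity
    linarith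
  obtain ⟨s, h1, h2, hs⟩ := (hreal.and (hsmall.and self_mem_nhdsWithin)).exists
  have hs : 1 < s := by simpa using hs
  have hd : 0 < s - 1 := by linarith
  have hc : 0 ≤ CC.toReal := ENNReal.toReal_nonneg
  have h3 : (s - 1) * (CC.toReal + 1) < 0.3 := by
    rw [← lt_div_iff₀ (by linarith)]; linarith
  have h4 : (J : ℝ) * 0.3 ≤ CC.toReal * (s - 1) + D * (A * 5) := by
    have := mul_le_mul_of_nonneg_right h1 hd.le
    field_simp at this
    linarith
  have h5 : (J : ℝ) = 20 * D * A + 1 := by rw [hJ]; push_cast; ring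
  rw [h5] at h4
  have : (0:ℝ) ≤ D * A := by positivity
  nlinarith

universe u
theorem spec_alg (A : Type u) [CommRing A] [Nontrivial A] [Algebra ℚ A] [Algebra.FiniteType ℚ A] :
    ∃ (F : Type u) (_ : Field F) (_ : NumberField F), Nonempty (A →+* F) := by
  obtain ⟨m, hm⟩ := Ideal.exists_maximal A
  let _ : Field (A ⧸ m) := Ideal.Quotient.field m
  have hf : Module.Finite ℚ (A ⧸ m) := finite_of_finite_type_of_isJacobsonRing ℚ (A ⧸ m)
  have hc : CharZero (A ⧸ m) := algebraRat.charZero _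
  refine ⟨A ⧸ m, inferInstance, { to_charZero := hc, to_finiteDimensional := ?_ }, ⟨Ideal.Quotient.mk m⟩⟩
  convert hf
  exact Subsingleton.elim _ _

theorem spec_nf {K : Type u} [Field K] [CharZero K] (s : Finset K) :
    ∃ (F : Type u) (_ : Field F) (_ : NumberField F), Nonempty (Subring.closure (s : Set K) →+* F) := by
  have hA : Algebra.FiniteType ℚ (Algebra.adjoin ℚ (s : Set K)) :=
    (Algebra.adjoin ℚ (s : Set K)).fg_iff_finiteType.mp ⟨s, rfl⟩
  obtain ⟨F, i1, i2, ⟨f⟩⟩ := spec_alg (Algebra.adjoin ℚ (s : Set K))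
  refine ⟨F, i1, i2, ⟨f.comp (Subring.inclusion (T := (Algebra.adjoin ℚ (s : Set K)).toSubring) ?_)⟩⟩
  rw [Subring.closure_le]
  exact Algebra.subset_adjoin

theorem spec_C {K : Type u} [Field K] [CharZero K] (s : Finset K) :
    Nonempty (Subring.closure (s : Set K) →+* ℂ) := by
  obtain ⟨F, _, _, ⟨σ⟩⟩ := spec_nf s
  have : Nonempty (F →+* ℂ) := inferInstance
  exact ⟨this.some.comp σ⟩

theorem spec_NT {K : Type u} [Field K] [CharZero K] (s : Finset K) (A : ℕ) :
    ∃ (P : Finset ℕ) (T : ℕ), 0 < T ∧ (∀ p ∈ P, p.Prime ∧ p - 1 ∣ T ∧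
      Nonempty (Subring.closure (s : Set K) →+* ZMod p)) ∧
      T ^ A < ∏ p ∈ P, p := by
  classical
  obtain ⟨F, _, _, ⟨σ⟩⟩ := spec_nf s
  have h1 : ∀ x : F, ∃ y : ℤ, y ≠ 0 ∧ IsIntegral ℤ (y • x) := fun x =>
    ((IsFractionRing.isAlgebraic_iff ℤ ℚ F).mpr (IsAlgebraic.of_finite ℚ x)).exists_integral_multiple 
  choose y hy0 hy using h1
  let S : Finset F := (s.attach.image fun x => σ ⟨x.1, Subring.subset_closure x.2⟩)
  let N : ℤ := ∏ x ∈ S, y x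
  have hN : N ≠ 0 := Finset.prod_ne_zero_iff.mpr fun x _ => hy0 x
  have hNS : ∀ x ∈ S, IsIntegral ℤ (N • x) := by
    intro x hx
    obtain ⟨c, hc⟩ := Finset.dvd_prod_of_mem y hx
    have : N • x = c • (y x • x) := by
      rw [smul_smul]; congr 1; rw [mul_comm]; exact hc
    rw [this]
    exact (hy x).smul c
  obtain ⟨P, T, hT, hP, hlt⟩ := NT_main F A N.natAbs
  refine ⟨P, T, hT, fun p hp => ?_, hlt⟩
  obtain ⟨hpp, hNp, hpT, ⟨ψ⟩⟩ := hP p hp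
  refine ⟨hpp, hpT, ?_⟩
  have := Fact.mk hpp
  have hu : IsUnit (ψ (N : 𝓞 F)) := by
    rw [map_intCast, isUnit_iff_ne_zero, Ne, ZMod.intCast_zmod_eq_zero_iff_dvd]
    intro h
    have := Int.natAbs_dvd_natAbs.mpr h
    have := Nat.le_of_dvd (Int.natAbs_pos.mpr hN) this
    simp at this
    omega
  have hu2 : IsUnit (algebraMap (𝓞 F) F (N : 𝓞 F)) := by
    rw [map_intCast, isUnit_iff_ne_zero]
    exact_mod_cast hN
  let ψ' : Localization.Away (N : 𝓞 F) →+* ZMod p := IsLocalization.Away.lift (N : 𝓞 F) hu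
  let ι : Localization.Away (N : 𝓞 F) →+* F := IsLocalization.Away.lift (N : 𝓞 F) hu2
  have hι : Function.Injective ι := by
    rw [injective_iff_map_eq_zero]
    intro a ha
    obtain ⟨⟨b, c⟩, hbc⟩ := IsLocalization.surj (Submonoid.powers (N : 𝓞 F)) a
    have h2 := congrArg ι hbc
    rw [map_mul, ha, zero_mul] at h2
    have h3 : ι (algebraMap _ _ b) = algebraMap (𝓞 F) F b := IsLocalization.Away.lift_eq _ hu2 b
    rw [h3] at h2
    have hb : b = 0 := by
      apply FaithfulSMul.algebraMap_injective (𝓞 F) F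
      rw [← h2, map_zero]
    rw [hb] at hbc
    simp only [map_zero] at hbc
    exact (IsLocalization.map_units (Localization.Away (N : 𝓞 F)) c).mul_left_eq_zero.mp hbc
  have hmem : ∀ x : Subring.closure (s : Set K), σ x ∈ ι.range := by
    rintro ⟨x, hx⟩
    induction hx using Subring.closure_induction with
    | mem x hx =>
      have hxS : σ ⟨x, Subring.subset_closure hx⟩ ∈ S := 
        Finset.mem_image.mpr ⟨⟨x, hx⟩, Finset.mem_attach _ _, rfl⟩
      refine ⟨IsLocalization.mk' (Localization.Away (N : 𝓞 F)) (show 𝓞 F from ⟨_, hNS _ hxS⟩) ⟨(N : 𝓞 F), Submonoid.mem_powers _⟩, ?_⟩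
      have h5 : algebraMap (𝓞 F) F (N : 𝓞 F) * ι (IsLocalization.mk' (Localization.Away (N : 𝓞 F)) (show 𝓞 F from ⟨_, hNS _ hxS⟩) ⟨(N : 𝓞 F), Submonoid.mem_powers _⟩)
          = algebraMap (𝓞 F) F (show 𝓞 F from ⟨_, hNS _ hxS⟩) := by
        rw [← IsLocalization.Away.lift_eq (S := Localization.Away (N : 𝓞 F)) (N : 𝓞 F) hu2, 
          ← IsLocalization.Away.lift_eq (S := Localization.Away (N : 𝓞 F)) (N : 𝓞 F) hu2]
        change ι _ * ι _ = ι _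
        rw [← map_mul]
        congr 1
        exact IsLocalization.mk'_spec' (Localization.Away (N : 𝓞 F)) _ (⟨(N : 𝓞 F), Submonoid.mem_powers _⟩ : Submonoid.powers (N : 𝓞 F))
      apply hu2.mul_left_cancel
      rw [h5, map_intCast, ← zsmul_eq_mul]
      rfl
    | zero => exact (map_zero σ) ▸ zero_mem _
    | one => exact (map_one σ) ▸ one_mem _
    | add x y hx hy h1 h2 => exact (map_add σ ⟨x, hx⟩ ⟨y, hy⟩) ▸ add_mem h1 h2
    | neg x hx h1 => exact (map_neg σ ⟨x, hx⟩) ▸ neg_mem h1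
    | mul x y hx hy h1 h2 => exact (map_mul σ ⟨x, hx⟩ ⟨y, hy⟩) ▸ mul_mem h1 h2
  let e : Localization.Away (N : 𝓞 F) ≃+* ι.range := RingEquiv.ofBijective ι.rangeRestrict 
    ⟨fun a b h => hι (congrArg Subtype.val h), ι.rangeRestrict_surjective⟩
  exact ⟨(ψ'.comp e.symm.toRingHom).comp (σ.codRestrict ι.range hmem)⟩

section jordan_part
open scoped commutatorElement
set_option linter.unusedSectionVars false
lemma exists_eig {V : Type*} [AddCommGroup V] [Module ℂ V] [FiniteDimensional ℂ V]
    (f : V →ₗ[ℂ] V) (W : Submodule ℂ V) (hW : W ≠ ⊥) (hf : ∀ v ∈ W, f v ∈ W) :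
    ∃ μ : ℂ, ∃ v ∈ W, v ≠ 0 ∧ f v = μ • v := by
  have : Nontrivial W := Submodule.nontrivial_iff_ne_bot.mpr hW
  obtain ⟨μ, hμ⟩ := Module.End.exists_eigenvalue (f.restrict hf)
  obtain ⟨v, hv⟩ := hμ.exists_hasEigenvector
  refine ⟨μ, v, v.2, fun h => hv.2 (Subtype.ext h), ?_⟩
  exact congrArg Subtype.val hv.apply_eq_smul

lemma unip_fix {V : Type*} [AddCommGroup V] [Module ℂ V] (C : V →ₗ[ℂ] V) {m : ℕ} (hm : m ≠ 0)
    (hC : C ^ m = 1) (v : V) (h : C (C v - v) = C v - v) : C v = v := by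
  have key : ∀ k : ℕ, (C ^ k) v = v + k • (C v - v) := by
    intro k
    induction k with
    | zero => simp
    | succ k ih =>
      rw [pow_succ', Module.End.mul_apply, ih, map_add, map_nsmul, h, succ_nsmul]
      abel
  have h1 := key m
  rw [hC, Module.End.one_apply, left_eq_add] at h1
  rw [← Nat.cast_smul_eq_nsmul ℂ, smul_eq_zero] at h1
  rcases h1 with h1 | h1
  · exact absurd h1 (by exact_mod_cast hm)
  · exact sub_eq_zero.mp h1

section jord
variable {G : Type*} [Group G] [Finite G] {V : Type*} [NormedAddCommGroup V] [NormedSpace ℂ V]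
  [FiniteDimensional ℂ V] (ρ : G →* (V →L[ℂ] V))

lemma rho_norm (hiso : ∀ g v, ‖ρ g v‖ = ‖v‖) (g : G) : ‖ρ g‖ ≤ 1 :=
  ContinuousLinearMap.opNorm_le_bound _ zero_le_one fun v => by rw [hiso, one_mul]

lemma rho_comm_norm (hiso : ∀ g v, ‖ρ g v‖ = ‖v‖) (g h : G) : ‖ρ ⁅g, h⁆ - 1‖ ≤ 2 * ‖ρ g - 1‖ * ‖ρ h - 1‖ := by
  have h1 : ρ ⁅g, h⁆ - 1 = ((ρ g - 1) * (ρ h - 1) - (ρ h - 1) * (ρ g - 1)) * (ρ (g⁻¹ * h⁻¹)) := by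
    have e1 : ρ ⁅g, h⁆ = ρ g * ρ h * ρ (g⁻¹ * h⁻¹) := by
      rw [← map_mul, ← map_mul, commutatorElement_def]; simp only [mul_assoc]
    have e2 : (1 : V →L[ℂ] V) = ρ h * ρ g * ρ (g⁻¹ * h⁻¹) := by
      rw [← map_mul, ← map_mul, ← map_one ρ]; congr 1; group
    rw [e1]
    nth_rewrite 1 [e2]
    noncomm_ring
  rw [h1]
  calc _ ≤ ‖(ρ g - 1) * (ρ h - 1) - (ρ h - 1) * (ρ g - 1)‖ * ‖ρ (g⁻¹ * h⁻¹)‖ := norm_mul_le _ _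
    _ ≤ ‖(ρ g - 1) * (ρ h - 1) - (ρ h - 1) * (ρ g - 1)‖ * 1 := by
      gcongr; exact rho_norm ρ hiso _
    _ ≤ (‖(ρ g - 1) * (ρ h - 1)‖ + ‖(ρ h - 1) * (ρ g - 1)‖) * 1 := by
      gcongr; exact norm_sub_le _ _
    _ ≤ (‖ρ g - 1‖ * ‖ρ h - 1‖ + ‖ρ h - 1‖ * ‖ρ g - 1‖) * 1 := by
      gcongr <;> exact norm_mul_le _ _
    _ = _ := by ring

lemma avg_lemma (hiso : ∀ g v, ‖ρ g v‖ = ‖v‖) (g h : G) (hh : ‖ρ h - 1‖ < 1) (l m : ℂ) (hlm : l ≠ m)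
    (v w : V) (hv : v ≠ 0) (hgv : ρ g v = l • v) (hgw : ρ g w = m • w) (hw : ρ h w = v) : False := by
  have hpow : ∀ (a : ℂ) (x : V), ρ g x = a • x → ∀ k : ℕ, ρ (g ^ k) x = a ^ k • x := by
    intro a x hx k
    induction k with
    | zero => simp
    | succ k ih =>
      rw [pow_succ, map_mul, mul_apply_eq_comp, hx, map_smul, ih, smul_smul, pow_succ']
  have hw0 : w ≠ 0 := by rintro rfl; apply hv; rw [← hw, map_zero]
  have hwv : ‖w‖ = ‖v‖ := by rw [← hw, hiso]
  set d := orderOf g with hd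
  have hd0 : 0 < d := orderOf_pos g
  have hroot : ∀ (a : ℂ) (x : V), x ≠ 0 → ρ g x = a • x → a ^ d = 1 := by
    intro a x hx0 hx
    have h1 := hpow a x hx d
    rw [hd, pow_orderOf_eq_one, map_one, one_apply_eq_self] at h1
    have : ((1:ℂ) - a ^ d) • x = 0 := by rw [sub_smul, one_smul]; exact sub_eq_zero.mpr h1
    rcases smul_eq_zero.mp this with h | h
    · exact (sub_eq_zero.mp h).symm
    · exact absurd h hx0
  have hl := hroot l v hv hgv
  have hm := hroot m w hw0 hgw
  have hl0 : l ≠ 0 := by rintro rfl; rw [zero_pow hd0.ne'] at hl; exact zero_ne_one hl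
  have hln : ‖l‖ = 1 := by
    have h1 := congrArg norm hgv
    rw [hiso, norm_smul] at h1
    have : 0 < ‖v‖ := norm_pos_iff.mpr hv
    nlinarith
  have hsum : ∑ k ∈ Finset.range d, (l⁻¹) ^ k • ρ (g ^ k) (v - w) = (d : ℂ) • v := by
    have e1 : ∀ k ∈ Finset.range d, (l⁻¹) ^ k • ρ (g ^ k) (v - w) = v - ((l⁻¹ * m) ^ k) • w := by
      intro k _
      rw [map_sub, hpow l v hgv, hpow m w hgw, smul_sub, smul_smul, smul_smul, ← mul_pow, ← mul_pow, inv_mul_cancel₀ hl0,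
        one_pow, one_smul]
    rw [Finset.sum_congr rfl e1, Finset.sum_sub_distrib, ← Finset.sum_smul]
    have hne : l⁻¹ * m ≠ 1 := by
      intro h; apply hlm; field_simp at h; exact h.symm
    have : ∑ k ∈ Finset.range d, (l⁻¹ * m) ^ k = 0 := by
      rw [geom_sum_eq hne, mul_pow, inv_pow, hl, hm]; simp
    rw [this]
    simp [Nat.cast_smul_eq_nsmul]
  have hb : ‖(d : ℂ) • v‖ ≤ d * ‖v - w‖ := by
    rw [← hsum]
    refine (norm_sum_le _ _).trans ?_
    have : ∀ k ∈ Finset.range d, ‖(l⁻¹) ^ k • ρ (g ^ k) (v - w)‖ = ‖v - w‖ := by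
      intro k _
      rw [norm_smul, hiso, norm_pow, norm_inv, hln]; simp
    rw [Finset.sum_congr rfl this]; simp
  rw [norm_smul, Complex.norm_natCast] at hb
  have hb2 : ‖v‖ ≤ ‖v - w‖ := le_of_mul_le_mul_left hb (by exact_mod_cast hd0)
  have h3 : v - w = (ρ h - 1) w := by simp [hw]
  have h4 : ‖v - w‖ ≤ ‖ρ h - 1‖ * ‖w‖ := by rw [h3]; exact ContinuousLinearMap.le_opNorm _ _
  have : 0 < ‖w‖ := norm_pos_iff.mpr hw0
  nlinarith

lemma key_comm (hinj : Function.Injective ρ) (hiso : ∀ g v, ‖ρ g v‖ = ‖v‖) (g h : G) (hh : ‖ρ h - 1‖ < 1) 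
    (hc : Commute g ⁅g, h⁆) : ⁅g, h⁆ = 1 := by
  by_contra hne
  set c := ⁅g, h⁆ with hcdef
  let C : V →ₗ[ℂ] V := (ρ c : V →ₗ[ℂ] V)
  have hCpow : C ^ (orderOf c) = 1 := by
    have h1 : ∀ k : ℕ, C ^ k = (ρ (c ^ k) : V →ₗ[ℂ] V) := by
      intro k
      induction k with
      | zero => simp
      | succ k ih => rw [pow_succ, ih, pow_succ, map_mul]; rfl
    rw [h1, pow_orderOf_eq_one, map_one]; rfl
  let W := LinearMap.range (C - 1)
  have hW : W ≠ ⊥ := by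
    intro h
    have h0 : C - 1 = 0 := LinearMap.range_eq_bot.mp h
    apply hne
    apply hinj
    rw [map_one]
    ext v
    have := LinearMap.congr_fun h0 v
    exact sub_eq_zero.mp this
  set k := h * g * h⁻¹ with hk
  have hck : c = g * k⁻¹ := by rw [hcdef, hk, commutatorElement_def]; group
  have hgk : Commute g k := by
    have : k = c⁻¹ * g := by rw [hck]; group
    rw [this]
    exact (hc.inv_right).mul_right (Commute.refl g)
  have hkc : Commute k c := by
    rw [hck]; exact (hgk.symm).mul_right (Commute.refl k).inv_right
  have hstab : ∀ x : G, Commute x c → ∀ v ∈ W, ρ x v ∈ W := by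
    rintro x hx _ ⟨u, rfl⟩
    refine ⟨ρ x u, ?_⟩
    have : ρ c (ρ x u) = ρ x (ρ c u) := by
      rw [← mul_apply_eq_comp, ← mul_apply_eq_comp, ← map_mul, ← map_mul, hx.eq]
    change ρ c (ρ x u) - ρ x u = ρ x (ρ c u - u)
    rw [this, map_sub]
  obtain ⟨l, v0, hv0W, hv00, hv0⟩ := exists_eig (ρ g : V →ₗ[ℂ] V) W hW (hstab g hc)
  let W2 : Submodule ℂ V := W ⊓ LinearMap.ker ((ρ g : V →ₗ[ℂ] V) - l • 1)
  have hmem2 : ∀ v, v ∈ W2 ↔ v ∈ W ∧ ρ g v = l • v := by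
    intro v
    simp [W2, sub_eq_zero]
  have hW2 : W2 ≠ ⊥ := by
    intro h
    apply hv00
    rw [← Submodule.mem_bot ℂ, ← h, hmem2]
    exact ⟨hv0W, hv0⟩
  obtain ⟨m, v, hvW, hv, hkv⟩ := exists_eig (ρ k : V →ₗ[ℂ] V) W2 hW2 (by
    intro v hv
    rw [hmem2] at hv ⊢
    refine ⟨hstab k hkc v hv.1, ?_⟩
    change ρ g (ρ k v) = l • ρ k v
    rw [← mul_apply_eq_comp, ← map_mul, hgk.eq, map_mul, mul_apply_eq_comp, hv.2, map_smul])
  rw [hmem2] at hvW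
  have hkv : ρ k v = m • v := hkv
  by_cases hlm : l = m
  · -- c v = v
    have h1 : ρ c v = v := by
      have h2 : ρ c (ρ k v) = ρ g v := by
        rw [← mul_apply_eq_comp, ← map_mul, hck]; simp
      rw [hkv, hvW.2, hlm, map_smul] at h2
      have hm0 : m ≠ 0 := by
        rintro rfl
        have := hiso k v
        rw [hkv] at this
        simp at this
        exact hv (norm_eq_zero.mp this.symm)
      exact smul_right_injective V hm0 h2
    obtain ⟨u, hu⟩ := hvW.1
    have hu : C u - u = v := hu
    have h3 := unip_fix C (orderOf_pos c).ne' hCpow u (by rw [hu]; exact h1)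
    apply hv
    rw [← hu, h3, sub_self]
  · refine avg_lemma ρ hiso g h hh l m hlm v (ρ h⁻¹ v) hv hvW.2 ?_ ?_
    · have : g * h⁻¹ = h⁻¹ * k := by rw [hk]; group
      rw [← mul_apply_eq_comp, ← map_mul, this, map_mul, mul_apply_eq_comp, hkv, map_smul]
    · rw [← mul_apply_eq_comp, ← map_mul]; simp

lemma small_commute (hinj : Function.Injective ρ) (hiso : ∀ g v, ‖ρ g v‖ = ‖v‖) (g h : G) (hg : ‖ρ g - 1‖ < 1 / 2) 
    (hh : ‖ρ h - 1‖ < 1 / 2) : ⁅g, h⁆ = 1 := by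
  have wf : WellFounded (InvImage (· < ·) (fun x : G => ‖ρ x - 1‖)) := by
    have : IsTrans G (InvImage (· < ·) (fun x : G => ‖ρ x - 1‖)) := ⟨fun a b c h1 h2 => lt_trans h1 h2⟩
    have : Std.Irrefl (InvImage (· < ·) (fun x : G => ‖ρ x - 1‖)) := ⟨fun a h => lt_irrefl _ h⟩
    exact Finite.wellFounded_of_trans_of_irrefl _
  induction h using wf.induction with
  | _ h ih =>
  by_cases h0 : ‖ρ h - 1‖ = 0
  · have : h = 1 := by
      apply hinj
      rw [map_one]; exact sub_eq_zero.mp (norm_eq_zero.mp h0)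
    rw [this]; simp
  have hpos : 0 < ‖ρ h - 1‖ := lt_of_le_of_ne (norm_nonneg _) (Ne.symm h0)
  have h1 := rho_comm_norm ρ hiso g h
  have h2 : ‖ρ ⁅g, h⁆ - 1‖ < ‖ρ h - 1‖ := by nlinarith
  have h3 := ih ⁅g, h⁆ h2 (h2.trans hh)
  exact key_comm ρ hinj hiso g h (by linarith) (commutatorElement_eq_one_iff_commute.mp h3)

theorem jordan_norm (hinj : Function.Injective ρ) (hiso : ∀ g v, ‖ρ g v‖ = ‖v‖) : ∃ A : Subgroup G, 
    (∀ a ∈ A, ∀ b ∈ A, a * b = b * a) ∧ A.index ≤ 5 ^ (2 * (Module.finrank ℂ V) ^ 2) := by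
  classical
  let S : Set G := {g | ‖ρ g - 1‖ < 1 / 2}
  refine ⟨Subgroup.closure S, ?_, ?_⟩
  · have hS : ∀ a ∈ S, ∀ b ∈ S, a * b = b * a := fun a ha b hb =>
      (commutatorElement_eq_one_iff_commute.mp (small_commute ρ hinj hiso a b ha hb)).eq
    intro a ha b hb
    induction ha, hb using Subgroup.closure_induction₂ with
    | mem x y hx hy => exact hS x hx y hy
    | one_left x _ => simp
    | one_right x _ => simp
    | mul_left x y z _ _ _ h1 h2 => exact (Commute.mul_left (show Commute x z from h1) h2).eq
    | mul_right x y z _ _ _ h1 h2 => exact (Commute.mul_right (show Commute z x from h1) h2).eq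
    | inv_left x y _ _ h => exact (Commute.inv_left (show Commute x y from h)).eq
    | inv_right x y _ _ h => exact (Commute.inv_right (show Commute x y from h)).eq
  · set A := Subgroup.closure S
    have : Fintype (G ⧸ A) := Fintype.ofFinite _
    let f : G ⧸ A → (V →L[ℂ] V) := fun q => (2 : ℂ) • ρ q.out
    have hsep : ∀ a b : G ⧸ A, a ≠ b → 1 ≤ ‖f a - f b‖ := by
      intro a b hab
      by_contra hlt
      push Not at hlt
      apply hab
      rw [← a.out_eq', ← b.out_eq']
      apply QuotientGroup.eq.mpr
      apply Subgroup.subset_closure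
      change ‖ρ (a.out⁻¹ * b.out) - 1‖ < 1 / 2
      have e : ρ (a.out⁻¹ * b.out) - 1 = ρ a.out⁻¹ * (ρ b.out - ρ a.out) := by
        rw [mul_sub, ← map_mul, ← map_mul, inv_mul_cancel, map_one]
      have e2 : ‖f a - f b‖ = 2 * ‖ρ b.out - ρ a.out‖ := by
        change ‖(2:ℂ) • ρ a.out - (2:ℂ) • ρ b.out‖ = _
        rw [← smul_sub, norm_smul, norm_sub_rev]; simp
      rw [e]
      have h5 := norm_mul_le (ρ a.out⁻¹) (ρ b.out - ρ a.out)
      have h6 := rho_norm ρ hiso a.out⁻¹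
      have h7 := norm_nonneg (ρ b.out - ρ a.out)
      nlinarith
    have hfinj : Function.Injective f := by
      intro a b hab
      by_contra h
      have := hsep a b h
      rw [hab, sub_self, norm_zero] at this
      linarith
    have hcard := Besicovitch.card_le_of_separated (Finset.univ.image f) (by
      intro c hc
      obtain ⟨q, -, rfl⟩ := Finset.mem_image.mp hc
      change ‖(2:ℂ) • ρ q.out‖ ≤ 2
      rw [norm_smul]
      have := rho_norm ρ hiso q.out
      simp; linarith) (by
      intro c hc d hd hcd
      obtain ⟨q, -, rfl⟩ := Finset.mem_image.mp hc
      obtain ⟨q', -, rfl⟩ := Finset.mem_image.mp hd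
      exact hsep _ _ (fun h => hcd (by rw [h])))
    rw [Finset.card_image_of_injective _ hfinj, Finset.card_univ] at hcard
    rw [Subgroup.index, Nat.card_eq_fintype_card]
    refine hcard.trans (le_of_eq ?_)
    congr 1
    rw [finrank_real_of_complex, ← (LinearMap.toContinuousLinearMap (𝕜 := ℂ) (E := V) (F' := V)).finrank_eq, Module.finrank_linearMap, sq]
end jord

theorem jordan_C {G : Type*} [Group G] [Finite G] {V : Type*} [AddCommGroup V] [Module ℂ V]
    [FiniteDimensional ℂ V] (ρ : G →* (Module.End ℂ V)) (hinj : Function.Injective ρ) : ∃ A : Subgroup G, 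
    (∀ a ∈ A, ∀ b ∈ A, a * b = b * a) ∧ A.index ≤ 5 ^ (2 * (Module.finrank ℂ V) ^ 2) := by
  have : Fintype G := Fintype.ofFinite G
  let e := (Module.finBasis ℂ V).equivFun
  let T : V →ₗ[ℂ] (G → Fin (Module.finrank ℂ V) → ℂ) := LinearMap.pi fun g => e.toLinearMap ∘ₗ ρ g
  have hT : Function.Injective T := by
    intro v w h
    have h1 := congrFun h 1
    simp only [T, LinearMap.pi_apply, map_one] at h1
    exact e.injective h1
  let i1 : NormedAddCommGroup V := NormedAddCommGroup.induced V (G → Fin (Module.finrank ℂ V) → ℂ) T hT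
  let i2 : NormedSpace ℂ V := NormedSpace.induced ℂ V (G → Fin (Module.finrank ℂ V) → ℂ) T
  refine jordan_norm (((Module.End.toContinuousLinearMap V : Module.End ℂ V ≃ₐ[ℂ] (V →L[ℂ] V)) : Module.End ℂ V →* (V →L[ℂ] V)).comp ρ) ?_ ?_
  · intro a b h
    exact hinj ((Module.End.toContinuousLinearMap (𝕜 := ℂ) V).injective h)
  · intro g v
    change ‖T (ρ g v)‖ = ‖T v‖
    have : T (ρ g v) = T v ∘ (Equiv.mulRight g) := by
      funext x
      simp [T, map_mul]
    rw [this]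
    simp only [Pi.norm_def]
    congr 1
    apply le_antisymm
    · refine Finset.sup_le fun x _ => ?_
      exact Finset.le_sup (f := fun x => ‖T v x‖₊) (Finset.mem_univ (Equiv.mulRight g x))
    · refine Finset.sup_le fun x _ => ?_
      refine le_trans (le_of_eq ?_) (Finset.le_sup (f := fun x => ‖(T v ∘ (Equiv.mulRight g)) x‖₊) (Finset.mem_univ ((Equiv.mulRight g).symm x)))
      simp only [Function.comp, Equiv.apply_symm_apply]

end jordan_part

lemma avg_step {A R G : Type*} [CommRing A] [Ring R] [Algebra A R] [Group G] [Fintype G] (ρ S : G → R)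
    (hS : ∀ x, ρ x * S x = 1) (hS' : ∀ x, S x * ρ x = 1) (q v : A) (hu : v * (Fintype.card G : A) = 1)
    (D : G → G → R) (hD : ∀ g h, ρ (g * h) = ρ g * ρ h + q • D g h) :
    ∃ (ρ' Δ : G → R) (E : G → G → R), (∀ g, ρ' g = ρ g + q • Δ g) ∧
      ∀ g h, ρ' (g * h) = ρ' g * ρ' h + (q * q) • E g h := by
  let δ : G → G → R := fun g x => D g x * S x
  let Δ : G → R := fun g => v • ∑ x, δ g x
  have hc : ∀ g x, ρ (g * x) * S x = ρ g + q • δ g x := by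
    intro g x
    rw [hD, add_mul, mul_assoc, hS, mul_one, smul_mul_assoc]
  have hcc : ∀ g h x, ρ (g * h) + q • δ (g * h) x = (ρ g + q • δ g (h * x)) * (ρ h + q • δ h x) := by
    intro g h x
    rw [← hc, ← hc, ← hc, mul_assoc g h x]
    calc _ = ρ (g * (h * x)) * (S (h * x) * ρ (h * x)) * S x := by rw [hS', mul_one]
      _ = _ := by noncomm_ring
  have hone : ∀ r : R, v • ∑ _x : G, r = r := by
    intro r
    rw [Finset.sum_const, Finset.card_univ, ← Nat.cast_smul_eq_nsmul A, smul_smul, hu, one_smul]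
  refine ⟨fun g => ρ g + q • Δ g, Δ, fun g h => v • ∑ x, δ g (h * x) * δ h x - Δ g * Δ h, fun g => rfl, ?_⟩
  intro g h
  have h1 : v • ∑ x, (ρ (g * h) + q • δ (g * h) x) = v • ∑ x, ((ρ g + q • δ g (h * x)) * (ρ h + q • δ h x)) := by
    congr 1; exact Finset.sum_congr rfl fun x _ => hcc g h x
  have h2 : v • ∑ x, (ρ (g * h) + q • δ (g * h) x) = ρ (g * h) + q • Δ (g * h) := by
    rw [Finset.sum_add_distrib, smul_add, hone, ← Finset.smul_sum, smul_comm]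
  have h3 : ∑ x, δ g (h * x) = ∑ x, δ g x := 
    Fintype.sum_equiv (Equiv.mulLeft h) _ _ fun x => rfl
  have h4 : v • ∑ x, ((ρ g + q • δ g (h * x)) * (ρ h + q • δ h x)) = 
      ρ g * ρ h + q • (Δ g * ρ h) + q • (ρ g * Δ h) + (q * q) • (v • ∑ x, δ g (h * x) * δ h x) := by
    have : ∀ x, (ρ g + q • δ g (h * x)) * (ρ h + q • δ h x) = ρ g * ρ h + q • (δ g (h * x) * ρ h) + q • (ρ g * δ h x)
        + (q * q) • (δ g (h * x) * δ h x) := by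
      intro x
      simp only [add_mul, mul_add, smul_mul_assoc, mul_smul_comm, smul_smul, smul_add]
      abel
    simp only [this, Finset.sum_add_distrib, smul_add, hone]
    congr 1
    · congr 1
      · congr 1
        rw [← Finset.smul_sum, ← Finset.sum_mul, h3, smul_comm, ← smul_mul_assoc]
      · rw [← Finset.smul_sum, ← Finset.mul_sum, smul_comm, ← mul_smul_comm]
    · rw [← Finset.smul_sum, smul_comm]
  change ρ (g * h) + q • Δ (g * h) = (ρ g + q • Δ g) * (ρ h + q • Δ h) + _
  rw [← h2, h1, h4]
  simp only [add_mul, mul_add, smul_mul_assoc, mul_smul_comm, smul_smul, smul_add, smul_sub]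
  abel

lemma lift_step {p : ℕ} [Fact p.Prime] {n : ℕ} {G : Type*} [Group G] [Fintype G] (hG : ¬ p ∣ Fintype.card G)
    (φ : G →* Matrix (Fin n) (Fin n) (ZMod p)) (k : ℕ) :
    ∃ (ρ : G → Matrix (Fin n) (Fin n) ℤ_[p]) (D : G → G → Matrix (Fin n) (Fin n) ℤ_[p]),
      (∀ g, (PadicInt.toZMod (p := p)).mapMatrix (ρ g) = φ g) ∧ ∀ g h, ρ (g * h) = ρ g * ρ h + ((p : ℤ_[p]) ^ (k + 1)) • D g h := by
  have hker : ∀ x : ℤ_[p], PadicInt.toZMod x = 0 → ∃ y, x = p * y := by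
    intro x hx
    have : x ∈ RingHom.ker (PadicInt.toZMod (p := p)) := hx
    rw [PadicInt.ker_toZMod, PadicInt.maximalIdeal_eq_span_p, Ideal.mem_span_singleton] at this
    exact this
  have hp0 : PadicInt.toZMod (p : ℤ_[p]) = 0 := by simp
  induction k with
  | zero =>
    choose l hl using ZMod.ringHom_surjective (PadicInt.toZMod (p := p))
    let ρ : G → Matrix (Fin n) (Fin n) ℤ_[p] := fun g => (φ g).map l
    have hρ : ∀ g, (PadicInt.toZMod (p := p)).mapMatrix (ρ g) = φ g := by
      intro g; ext i j; simp [ρ, hl]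
    have : ∀ g h, ∃ D : Matrix (Fin n) (Fin n) ℤ_[p], ρ (g * h) = ρ g * ρ h + ((p : ℤ_[p]) ^ (0 + 1)) • D := by
      intro g h
      have h0 : (PadicInt.toZMod (p := p)).mapMatrix (ρ (g * h) - ρ g * ρ h) = 0 := by
        rw [map_sub, map_mul, hρ, hρ, hρ, map_mul, sub_self]
      have h1 : ∀ i j, ∃ y, (ρ (g * h) - ρ g * ρ h) i j = p * y := fun i j =>
        hker _ (by simpa using congrFun (congrFun h0 i) j)
      choose y hy using h1
      refine ⟨Matrix.of y, ?_⟩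
      ext i j
      have := hy i j
      rw [Matrix.sub_apply] at this
      simp only [Matrix.add_apply, Matrix.smul_apply, Matrix.of_apply, zero_add, pow_one, smul_eq_mul, ← this]
      ring
    choose D hD using this
    exact ⟨ρ, D, hρ, hD⟩
  | succ k ih =>
    obtain ⟨ρ, D, hρ, hD⟩ := ih
    have hunit : ∀ g, IsUnit (ρ g).det := by
      intro g
      have h1 : PadicInt.toZMod (ρ g).det = (φ g).det := by rw [RingHom.map_det, hρ]
      have h2 : IsUnit (φ g).det := by
        have : IsUnit (φ g) := (Group.isUnit g).map φ
        exact (Matrix.isUnit_iff_isUnit_det _).mp this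
      rw [PadicInt.isUnit_iff]
      by_contra h3
      have h4 : ‖(ρ g).det‖ < 1 := lt_of_le_of_ne (PadicInt.norm_le_one _) h3
      have h5 : (ρ g).det ∈ RingHom.ker (PadicInt.toZMod (p := p)) := by
        rw [PadicInt.ker_toZMod]
        exact PadicInt.mem_nonunits.mpr h4
      rw [RingHom.mem_ker, h1] at h5
      exact h2.ne_zero h5
    have hcard : IsUnit ((Fintype.card G : ℕ) : ℤ_[p]) := by
      rw [PadicInt.isUnit_iff]
      by_contra h3
      have h4 : ‖((Fintype.card G : ℕ) : ℤ_[p])‖ < 1 := lt_of_le_of_ne (PadicInt.norm_le_one _) h3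
      exact hG ((PadicInt.norm_natCast_lt_one_iff).mp h4)
    obtain ⟨v, hv⟩ := hcard.exists_left_inv
    obtain ⟨ρ', Δ, E, h1, h2⟩ := avg_step ρ (fun g => (ρ g)⁻¹) (fun x => Matrix.mul_nonsing_inv _ (hunit x))
      (fun x => Matrix.nonsing_inv_mul _ (hunit x)) ((p : ℤ_[p]) ^ (k + 1)) v hv D hD
    refine ⟨ρ', fun g h => ((p : ℤ_[p]) ^ k) • E g h, ?_, ?_⟩
    · intro g
      rw [h1, map_add, hρ]
      ext i j
      simp
    · intro g h
      rw [h2, smul_smul]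
      congr 2
      ring

theorem lift_exists {p : ℕ} [Fact p.Prime] {n : ℕ} {G : Type*} [Group G] [Fintype G] (hG : ¬ p ∣ Fintype.card G)
    (φ : G →* Matrix (Fin n) (Fin n) (ZMod p)) :
    ∃ (ρ : G →* Matrix (Fin n) (Fin n) ℤ_[p]), ∀ g, (PadicInt.toZMod (p := p)).mapMatrix (ρ g) = φ g := by
  choose l hl using ZMod.ringHom_surjective (PadicInt.toZMod (p := p))
  have hmod : ∀ (x : ℤ_[p]) (a : ZMod p), PadicInt.toZMod x = a ↔ x ∈ Metric.ball (l a) 1 := by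
    intro x a
    rw [mem_ball_iff_norm, ← PadicInt.mem_nonunits]
    change _ ↔ x - l a ∈ IsLocalRing.maximalIdeal ℤ_[p]
    rw [← PadicInt.ker_toZMod, RingHom.mem_ker, map_sub, hl, sub_eq_zero]
  let C : ℕ → Set (G → Fin n → Fin n → ℤ_[p]) := fun k => 
    {ρ | (∀ g i j, ρ g i j ∈ Metric.ball (l (φ g i j)) 1) ∧ 
      ∀ g h i j, ‖(∑ m, ρ g i m * ρ h m j) - ρ (g * h) i j‖ ≤ (p : ℝ) ^ (-k : ℤ)}
  have hclosed : ∀ k, IsClosed (C k) := by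
    intro k
    have : C k = (⋂ g, ⋂ i, ⋂ j, {ρ : G → Fin n → Fin n → ℤ_[p] | ρ g i j ∈ Metric.ball (l (φ g i j)) 1}) ∩
      (⋂ g, ⋂ h, ⋂ i, ⋂ j, {ρ : G → Fin n → Fin n → ℤ_[p] | ‖(∑ m, ρ g i m * ρ h m j) - ρ (g * h) i j‖ ≤ (p : ℝ) ^ (-k : ℤ)}) := by
      ext ρ; simp [C]
    rw [this]
    refine IsClosed.inter ?_ ?_
    · refine isClosed_iInter fun g => isClosed_iInter fun i => isClosed_iInter fun j => ?_
      exact (IsUltrametricDist.isClosed_ball _ _).preimage (f := fun ρ : G → Fin n → Fin n → ℤ_[p] => ρ g i j) (by fun_prop)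
    · refine isClosed_iInter fun g => isClosed_iInter fun h => isClosed_iInter fun i => isClosed_iInter fun j => ?_
      exact isClosed_le (by fun_prop) continuous_const
  have hne : (⋂ k, C k).Nonempty := by
    refine IsCompact.nonempty_iInter_of_sequence_nonempty_isCompact_isClosed C ?_ ?_ (hclosed 0).isCompact hclosed
    · intro k ρ hρ
      refine ⟨hρ.1, fun g h i j => (hρ.2 g h i j).trans ?_⟩
      apply zpow_le_zpow_right₀
      · exact_mod_cast (Fact.out : p.Prime).one_le
      · push_cast; omega
    · intro k
      obtain ⟨ρ, D, h1, h2⟩ := lift_step hG φ k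
      refine ⟨ρ, ?_, ?_⟩
      · intro g i j
        rw [← hmod, ← h1]; rfl
      · intro g h i j
        have h3 := congrFun (congrFun (h2 g h) i) j
        rw [Matrix.add_apply, Matrix.mul_apply, Matrix.smul_apply, smul_eq_mul] at h3
        rw [h3, sub_add_cancel_left, norm_neg, norm_mul, PadicInt.norm_p_pow]
        calc _ ≤ (p : ℝ) ^ (-((k + 1 : ℕ) : ℤ)) * 1 := by gcongr; exact PadicInt.norm_le_one _
          _ ≤ _ := by
            rw [mul_one]
            apply zpow_le_zpow_right₀
            · exact_mod_cast (Fact.out : p.Prime).one_le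
            · push_cast; omega
  obtain ⟨ρ, hρ⟩ := hne
  rw [Set.mem_iInter] at hρ
  let ρ' : G → Matrix (Fin n) (Fin n) ℤ_[p] := ρ
  have hmul : ∀ g h, ρ' (g * h) = ρ' g * ρ' h := by
    intro g h
    ext i j
    rw [Matrix.mul_apply]
    symm
    rw [← sub_eq_zero, ← norm_le_zero_iff]
    have hp1 : (1 : ℝ) < p := by exact_mod_cast (Fact.out : p.Prime).one_lt
    refine ge_of_tendsto' (tendsto_pow_atTop_nhds_zero_of_lt_one (r := (p : ℝ)⁻¹) (by positivity) (inv_lt_one_of_one_lt₀ hp1)) fun k => ?_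
    have := (hρ k).2 g h i j
    rw [_root_.zpow_neg, zpow_natCast, ← inv_pow] at this
    exact this
  have hred : ∀ g, (PadicInt.toZMod (p := p)).mapMatrix (ρ' g) = φ g := by
    intro g
    ext i j
    exact (hmod _ _).mpr ((hρ 0).1 g i j)
  have hone : ρ' 1 = 1 := by
    have h1 : IsUnit (ρ' 1) := by
      rw [Matrix.isUnit_iff_isUnit_det, PadicInt.isUnit_iff]
      by_contra h3
      have h4 : ‖(ρ' 1).det‖ < 1 := lt_of_le_of_ne (PadicInt.norm_le_one _) h3
      have h5 : (ρ' 1).det ∈ RingHom.ker (PadicInt.toZMod (p := p)) := by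
        rw [PadicInt.ker_toZMod]
        exact PadicInt.mem_nonunits.mpr h4
      rw [RingHom.mem_ker, RingHom.map_det, hred, map_one, Matrix.det_one] at h5
      exact one_ne_zero h5
    have h2 := hmul 1 1
    rw [mul_one] at h2
    exact (h1.mul_eq_left.mp h2.symm)
  exact ⟨⟨⟨ρ', hone⟩, hmul⟩, hred⟩

/-- entrywise corestriction of a matrix representation to a subring -/
def liftMat {K : Type*} [CommRing K] {n : ℕ} {G : Type*} [Monoid G] (ρ : G →* Matrix (Fin n) (Fin n) K) (R : Subring K)
    (hR : ∀ g i j, ρ g i j ∈ R) : G →* Matrix (Fin n) (Fin n) R where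
  toFun g := Matrix.of fun i j => ⟨ρ g i j, hR g i j⟩
  map_one' := by
    ext i j
    simp only [map_one, Matrix.of_apply]
    by_cases h : i = j
    · subst h; simp
    · simp [h]
  map_mul' g h := by
    ext i j
    simp [Matrix.mul_apply]

lemma liftMat_ne_one {K : Type*} [Field K] {n : ℕ} {G : Type*} [Monoid G] (ρ : G →* Matrix (Fin n) (Fin n) K) (R : Subring K)
    (hR : ∀ g i j, ρ g i j ∈ R) {L : Type*} [CommRing L] [Nontrivial L] (τ : R →+* L) (g : G) (i j : Fin n) 
    (h0 : (ρ g - 1) i j ≠ 0) (hinv : ((ρ g - 1) i j)⁻¹ ∈ R) : τ.mapMatrix (liftMat ρ R hR g) ≠ 1 := by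
  intro h
  have h1 : τ.mapMatrix (liftMat ρ R hR g - 1) = 0 := by rw [map_sub, h, map_one, sub_self]
  have h2 : τ ((liftMat ρ R hR g - 1) i j) = 0 := congrFun (congrFun h1 i) j
  have h3 : (liftMat ρ R hR g - 1) i j * ⟨_, hinv⟩ = 1 := by
    apply Subtype.ext
    have : (((liftMat ρ R hR g - 1) i j : R) : K) = (ρ g - 1) i j := by
      rw [Matrix.sub_apply, Matrix.sub_apply]
      by_cases h : i = j
      · subst h; simp [liftMat]
      · simp [liftMat, h]
    change (((liftMat ρ R hR g - 1) i j : R) : K) * ((ρ g - 1) i j)⁻¹ = 1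
    rw [this]
    exact mul_inv_cancel₀ h0
  have h4 := congrArg τ h3
  rw [map_mul, h2, zero_mul, map_one] at h4
  exact zero_ne_one h4

theorem jordan_p {p : ℕ} [Fact p.Prime] {n : ℕ} {G : Type*} [Group G] [Finite G] (hG : ¬ p ∣ Nat.card G)
    (φ : G →* Matrix (Fin n) (Fin n) (ZMod p)) (hφ : Function.Injective φ) : ∃ A : Subgroup G, 
    (∀ a ∈ A, ∀ b ∈ A, a * b = b * a) ∧ A.index ≤ 5 ^ (2 * n ^ 2) := by
  classical
  have : Fintype G := Fintype.ofFinite G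
  rw [Nat.card_eq_fintype_card] at hG
  obtain ⟨ρ0, hρ0⟩ := lift_exists hG φ
  let ρ : G →* Matrix (Fin n) (Fin n) ℚ_[p] := ((PadicInt.Coe.ringHom (p := p)).mapMatrix : Matrix (Fin n) (Fin n) ℤ_[p] →+* _).toMonoidHom.comp ρ0
  have hρinj : Function.Injective ρ := by
    intro a b h
    apply hφ
    rw [← hρ0, ← hρ0]
    congr 1
    ext i j
    exact Subtype.ext (congrFun (congrFun h i) j)
  let s : Finset ℚ_[p] := (Finset.univ.image fun x : G × Fin n × Fin n => ρ x.1 x.2.1 x.2.2) ∪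
    (Finset.univ.image fun x : G × Fin n × Fin n => ((ρ x.1 - 1) x.2.1 x.2.2)⁻¹)
  let R := Subring.closure (s : Set ℚ_[p])
  have hR : ∀ g i j, ρ g i j ∈ R := fun g i j => Subring.subset_closure 
    (Finset.mem_union_left _ (Finset.mem_image.mpr ⟨(g, i, j), Finset.mem_univ _, rfl⟩))
  have hR2 : ∀ g i j, ((ρ g - 1) i j)⁻¹ ∈ R := fun g i j => Subring.subset_closure 
    (Finset.mem_union_right _ (Finset.mem_image.mpr ⟨(g, i, j), Finset.mem_univ _, rfl⟩))
  obtain ⟨τ⟩ := spec_C s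
  let θ : G →* Matrix (Fin n) (Fin n) ℂ := (τ.mapMatrix : Matrix (Fin n) (Fin n) R →+* _).toMonoidHom.comp (liftMat ρ R hR)
  have hθ : Function.Injective θ := by
    rw [injective_iff_map_eq_one]
    intro g hg
    by_contra hne
    have h1 : ρ g - 1 ≠ 0 := fun h => hne (hρinj (by rw [map_one]; exact sub_eq_zero.mp h))
    have : ∃ i j, (ρ g - 1) i j ≠ 0 := by
      by_contra hc
      push Not at hc
      exact h1 (by ext i j; exact hc i j)
    obtain ⟨i, j, hij⟩ := this
    exact liftMat_ne_one ρ R hR τ g i j hij (hR2 g i j) hg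
  obtain ⟨A, h1, h2⟩ := jordan_C (((Matrix.toLinAlgEquiv' (R := ℂ) (n := Fin n)) : Matrix (Fin n) (Fin n) ℂ →* Module.End ℂ (Fin n → ℂ)).comp θ)
    (fun a b h => hθ ((Matrix.toLinAlgEquiv' (R := ℂ) (n := Fin n)).injective h))
  refine ⟨A, h1, ?_⟩
  simpa using h2

open Polynomial in
lemma ss_order {L : Type*} [Field L] {n : ℕ} (M : Matrix (Fin n) (Fin n) L) (S : Finset L)
    (hM : aeval M (∏ l ∈ S, (X - C l)) = 0) (R : Subring L) (MR : Matrix (Fin n) (Fin n) R)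
    (hMR : R.subtype.mapMatrix MR = M) (hS : ∀ l ∈ S, l ∈ R) (hS2 : ∀ l ∈ S, ∀ m ∈ S, (l - m)⁻¹ ∈ R)
    {p : ℕ} [Fact p.Prime] (τ : R →+* ZMod p) : (τ.mapMatrix MR) ^ p = τ.mapMatrix MR := by
  let g : R[X] := ∏ l ∈ S.attach, (X - C (⟨l.1, hS _ l.2⟩ : R))
  have hcomp : ∀ {A : Type _} [CommRing A] (σ : R →+* A), (algebraMap A (Matrix (Fin n) (Fin n) A)).comp σ = 
      (σ.mapMatrix : Matrix (Fin n) (Fin n) R →+* _).comp (algebraMap R (Matrix (Fin n) (Fin n) R)) := by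
    intro A _ σ
    ext r i j
    simp only [RingHom.comp_apply, Matrix.algebraMap_eq_diagonal, RingHom.mapMatrix_apply, Matrix.map_apply]
    by_cases h : i = j
    · subst h; simp
    · simp [Matrix.diagonal_apply_ne _ h]
  have hcomp2 : ∀ {A : Type _} [CommRing A] (σ : R →+* A), (algebraMap A (Matrix (Fin n) (Fin n) A)).comp σ = 
      (σ.mapMatrix : Matrix (Fin n) (Fin n) R →+* _).comp (algebraMap R (Matrix (Fin n) (Fin n) R)) := by
    intro A _ σ
    ext r i j
    simp only [RingHom.comp_apply, Matrix.algebraMap_eq_diagonal, RingHom.mapMatrix_apply, Matrix.map_apply]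
    by_cases h : i = j
    · subst h; simp
    · simp [Matrix.diagonal_apply_ne _ h]
  have h1 : aeval MR g = 0 := by
    have h2 := map_aeval_eq_aeval_map (hcomp R.subtype) g MR
    have hg : g.map R.subtype = ∏ l ∈ S, (X - C l) := by
      simp only [g, Polynomial.map_prod, Polynomial.map_sub, map_X, map_C, Subring.subtype_apply]
      exact Finset.prod_attach S (fun l => X - C l)
    rw [hMR, hg, hM] at h2
    ext i j
    exact congrFun (congrFun h2 i) j
  have h2 := map_aeval_eq_aeval_map (hcomp2 τ) g MR
  rw [h1, map_zero] at h2
  have hdvd : g.map τ ∣ X ^ p - X := by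
    simp only [g, Polynomial.map_prod, Polynomial.map_sub, map_X, map_C]
    apply Finset.prod_dvd_of_coprime
    · intro a _ b _ hab
      have hinj : Function.Injective (fun l : S => τ ⟨l.1, hS _ l.2⟩) := by
        intro x y hxy
        by_contra hne
        have hne' : x.1 - y.1 ≠ 0 := fun h => hne (Subtype.ext (sub_eq_zero.mp h))
        have e1 : ((⟨x.1, hS _ x.2⟩ : R) - ⟨y.1, hS _ y.2⟩) * ⟨_, hS2 _ x.2 _ y.2⟩ = 1 := 
          Subtype.ext (mul_inv_cancel₀ hne')
        have e2 := congrArg τ e1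
        have hxy : τ ⟨x.1, hS _ x.2⟩ = τ ⟨y.1, hS _ y.2⟩ := hxy
        rw [map_mul, map_sub, hxy, sub_self, zero_mul, map_one] at e2
        exact zero_ne_one e2
      exact pairwise_coprime_X_sub_C hinj hab
    · intro a _
      rw [dvd_iff_isRoot]
      simp [IsRoot, ZMod.pow_card]
  obtain ⟨q, hq⟩ := hdvd
  have h3 := congrArg (aeval (τ.mapMatrix MR)) hq
  rw [map_mul, ← h2, zero_mul, map_sub, map_pow, aeval_X] at h3
  exact sub_eq_zero.mp h3

open Polynomial in
lemma ss_roots {K : Type*} [Field K] [CharZero K] {n : ℕ} (M : Matrix (Fin n) (Fin n) K) 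
    (h : Module.End.IsSemisimple M.mulVecLin) : ∃ S : Finset (AlgebraicClosure K),
    aeval ((algebraMap K (AlgebraicClosure K)).mapMatrix M) (∏ l ∈ S, (X - C l)) = 0 := by
  classical
  have h1 := h.minpoly_squarefree
  rw [← Matrix.toLin'_apply', Matrix.minpoly_toLin'] at h1
  have hsep : (minpoly K M).Separable := PerfectField.separable_iff_squarefree.mpr h1
  set f := (minpoly K M).map (algebraMap K (AlgebraicClosure K)) with hf
  have hfs : f.Separable := hsep.map
  refine ⟨f.roots.toFinset, ?_⟩
  have hmon : f.leadingCoeff = 1 := ((minpoly.monic (Matrix.isIntegral M)).map _)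
  have e : f = ∏ l ∈ f.roots.toFinset, (X - C l) := by
    have h2 := (IsAlgClosed.splits f).eq_prod_roots
    rw [hmon, C_1, one_mul] at h2
    rw [Finset.prod_multiset_map_count] at h2
    refine h2.trans (Finset.prod_congr rfl fun l hl => ?_)
    rw [Multiset.count_eq_one_of_mem (nodup_roots hfs) (Multiset.mem_toFinset.mp hl), pow_one]
  have hcomp : (algebraMap (AlgebraicClosure K) (Matrix (Fin n) (Fin n) (AlgebraicClosure K))).comp
      (algebraMap K (AlgebraicClosure K)) =
      ((algebraMap K (AlgebraicClosure K)).mapMatrix : Matrix (Fin n) (Fin n) K →+* _).comp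
        (algebraMap K (Matrix (Fin n) (Fin n) K)) := by
    ext r i j
    simp only [RingHom.comp_apply, Matrix.algebraMap_eq_diagonal, RingHom.mapMatrix_apply, Matrix.map_apply]
    by_cases h : i = j
    · subst h; simp
    · simp [Matrix.diagonal_apply_ne _ h]
  have h5 := map_aeval_eq_aeval_map hcomp (minpoly K M) M
  rw [minpoly.aeval, map_zero] at h5
  rw [← e, hf]
  exact h5.symm

lemma good_prime {Γ : Type*} [Group Γ] (P : Finset ℕ) (T r : ℕ) {H : P → Type*} [∀ p, Group (H p)]
    (θ : ∀ p, Γ →* H p) (γ : Fin r → Γ) (hgen : ∀ x : Γ, ∃ k : Fin r → ℤ, x = (List.ofFn fun i => γ i ^ k i).prod)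
    (ht : ∀ p i, θ p (γ i) ^ T = 1) (hP : ∀ p ∈ P, p.Prime) (hT : 0 < T) (hlt : T ^ r < ∏ p ∈ P, p) :
    ∃ p : P, ¬ (p : ℕ) ∣ Nat.card (θ p).range ∧ Finite (θ p).range := by
  let Θ : Γ →* (∀ p, H p) := MonoidHom.pi fun p => θ p
  have hΘ : ∀ i, Θ (γ i) ^ T = 1 := by
    intro i; funext p; exact ht p i
  let F : (Fin r → Fin T) → Θ.range := fun k => ⟨Θ ((List.ofFn fun i => γ i ^ (k i : ℕ)).prod), ⟨_, rfl⟩⟩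
  have hF : Function.Surjective F := by
    rintro ⟨_, x, rfl⟩
    obtain ⟨k, hk⟩ := hgen x
    have hTz : (0 : ℤ) < T := by exact_mod_cast hT
    refine ⟨fun i => ⟨(k i % T).toNat, ?_⟩, ?_⟩
    · have h1 := Int.emod_nonneg (k i) hTz.ne'
      have h2 := Int.emod_lt_of_pos (k i) hTz
      omega
    · apply Subtype.ext
      change Θ _ = Θ x
      rw [hk, map_list_prod, map_list_prod, List.map_ofFn, List.map_ofFn]
      congr 2
      funext i
      simp only [Function.comp_apply, map_pow, map_zpow]
      rw [← zpow_natCast, Int.toNat_of_nonneg (Int.emod_nonneg (k i) hTz.ne')]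
      conv_rhs => rw [← Int.emod_add_mul_ediv (k i) T, _root_.zpow_add, _root_.zpow_mul, zpow_natCast, hΘ, _root_.one_zpow, mul_one]
  have hfin : Finite Θ.range := Finite.of_surjective F hF
  have hcard : Nat.card Θ.range ≤ T ^ r := by
    have := Nat.card_le_card_of_surjective F hF
    simpa using this
  have hsurj : ∀ p : P, ∃ f : Θ.range →* (θ p).range, Function.Surjective f := by
    intro p
    refine ⟨((Pi.evalMonoidHom H p).comp Θ.range.subtype).codRestrict (θ p).range ?_, ?_⟩
    · rintro ⟨_, x, rfl⟩
      exact ⟨x, rfl⟩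
    · rintro ⟨_, x, rfl⟩
      exact ⟨⟨Θ x, x, rfl⟩, rfl⟩
  by_contra hcon
  push Not at hcon
  have hdiv : ∏ p ∈ P, p ∣ Nat.card Θ.range := by
    apply Finset.prod_primes_dvd
    · intro p hp; exact (hP p hp).prime
    · intro p hp
      obtain ⟨f, hf⟩ := hsurj ⟨p, hp⟩
      have hfi : Finite (θ ⟨p, hp⟩).range := Finite.of_surjective f hf
      refine dvd_trans ?_ (Subgroup.card_dvd_of_surjective f hf)
      by_contra h
      exact absurd hfi (by simpa using hcon ⟨p, hp⟩ h)
  have := Nat.le_of_dvd Nat.card_pos hdiv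
  omega

lemma core_exists {Γ : Type*} [Group Γ] {r : ℕ} (γ : Fin r → Γ)
    (hgen : ∀ x : Γ, ∃ k : Fin r → ℤ, x = (List.ofFn fun i => γ i ^ k i).prod) (J : ℕ) :
    ∃ Γ0 : Subgroup Γ, Γ0.FiniteIndex ∧ ∀ H : Subgroup Γ, H.index ≠ 0 → H.index ≤ J → Γ0 ≤ H := by
  have hfin : ∀ m : ℕ, Finite (Γ →* Equiv.Perm (Fin m)) := by
    intro m
    apply Finite.of_injective (fun f : Γ →* Equiv.Perm (Fin m) => fun i => f (γ i))
    intro f g hfg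
    ext1 x
    obtain ⟨k, rfl⟩ := hgen x
    rw [map_list_prod, map_list_prod, List.map_ofFn, List.map_ofFn]
    congr 2
    funext i
    simp only [Function.comp_apply, map_zpow]
    rw [show f (γ i) = g (γ i) from congrFun hfg i]
  refine ⟨⨅ m : Fin (J + 1), ⨅ f : Γ →* Equiv.Perm (Fin m), f.ker, ?_, ?_⟩
  · exact Subgroup.finiteIndex_iInf fun m => Subgroup.finiteIndex_iInf fun f => Subgroup.finiteIndex_ker f
  · intro H h0 hJ
    have hfi : Finite (Γ ⧸ H) := Nat.finite_of_card_ne_zero h0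
    let e : (Γ ⧸ H) ≃ Fin H.index := Finite.equivFin (Γ ⧸ H)
    let f : Γ →* Equiv.Perm (Fin H.index) := (e.permCongrHom.toMonoidHom).comp (MulAction.toPermHom Γ (Γ ⧸ H))
    refine (iInf_le _ (⟨H.index, by omega⟩ : Fin (J + 1))).trans ((iInf_le _ f).trans ?_)
    refine le_trans ?_ H.normalCore_le
    rw [H.normalCore_eq_ker]
    intro x hx
    rw [MonoidHom.mem_ker] at hx ⊢
    apply e.permCongrHom.injective
    rw [map_one]
    exact hx

end aux_part

/-- A linear group over a field of characteristic zero that is boundedly generated by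
semi-simple elements is virtually solvable. -/
theorem stmt_1 {K : Type*} [Field K] [CharZero K] {n : ℕ} (hn : 1 ≤ n)
    (Γ : Subgroup (GL (Fin n) K)) (r : ℕ) (γ : Fin r → GL (Fin n) K)
    (hmem : ∀ i, γ i ∈ Γ)
    (hgen : ∀ x ∈ Γ, ∃ k : Fin r → ℤ, x = (List.ofFn fun i => γ i ^ k i).prod)
    (hss : ∀ i, IsSemisimpleElt (γ i)) :
    IsVirtuallySolvable ↥Γ := by
  classical
  let g : Fin r → Γ := fun i => ⟨γ i, hmem i⟩
  have hg : ∀ x : Γ, ∃ k : Fin r → ℤ, x = (List.ofFn fun i => g i ^ k i).prod := by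
    intro x
    obtain ⟨k, hk⟩ := hgen x x.2
    refine ⟨k, Subtype.ext ?_⟩
    rw [hk, ← Subgroup.subtype_apply, map_list_prod, List.map_ofFn]
    rfl
  obtain ⟨Γ0, hfi, hΓ0⟩ := core_exists g hg (5 ^ (2 * n ^ 2))
  refine ⟨Γ0, hfi, ?_⟩
  suffices hcomm : ∀ u ∈ Γ0, ∀ v ∈ Γ0, u * v = v * u from
    Group.isSolvable_of_comm fun a b => Subtype.ext (hcomm a a.2 b b.2)
  intro u hu v hv
  by_contra hne
  let L := AlgebraicClosure K
  have hL : CharZero L := inferInstance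
  let ρ : Γ →* Matrix (Fin n) (Fin n) L := ((algebraMap K L).mapMatrix : Matrix (Fin n) (Fin n) K →+* _).toMonoidHom.comp
    ((Units.coeHom _).comp Γ.subtype)
  have hρ : Function.Injective ρ := by
    intro a b hab
    apply Subtype.ext
    apply Units.ext
    ext i j
    exact (algebraMap K L).injective (congrFun (congrFun hab i) j)
  have hc1 : ρ (u * v * (v * u)⁻¹) - 1 ≠ 0 := by
    intro h
    apply hne
    have := hρ ((sub_eq_zero.mp h).trans (map_one ρ).symm)
    exact mul_inv_eq_one.mp this
  have : ∃ i j, (ρ (u * v * (v * u)⁻¹) - 1) i j ≠ 0 := by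
    by_contra hc
    push Not at hc
    exact hc1 (by ext i j; exact hc i j)
  obtain ⟨i0, j0, hij⟩ := this
  choose S hS using fun i => ss_roots ((γ i : Matrix (Fin n) (Fin n) K)) (hss i)
  let s : Finset L := (Finset.univ.image fun x : Fin r × Fin n × Fin n => ρ (g x.1) x.2.1 x.2.2) ∪
    (Finset.univ.image fun x : Fin r × Fin n × Fin n => ρ (g x.1)⁻¹ x.2.1 x.2.2) ∪
    (Finset.univ.biUnion S) ∪ (Finset.univ.biUnion fun i => (S i ×ˢ S i).image fun x => (x.1 - x.2)⁻¹) ∪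
    {((ρ (u * v * (v * u)⁻¹) - 1) i0 j0)⁻¹}
  let R := Subring.closure (s : Set L)
  have hsR : ∀ x ∈ s, x ∈ R := fun x hx => Subring.subset_closure hx
  have hR1 : ∀ k i j, ρ (g k) i j ∈ R := fun k i j => hsR _ (by
    simp only [s, Finset.mem_union, Finset.mem_image]
    exact Or.inl (Or.inl (Or.inl (Or.inl ⟨(k, i, j), Finset.mem_univ _, rfl⟩))))
  have hR2 : ∀ k i j, ρ (g k)⁻¹ i j ∈ R := fun k i j => hsR _ (by
    simp only [s, Finset.mem_union, Finset.mem_image]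
    exact Or.inl (Or.inl (Or.inl (Or.inr ⟨(k, i, j), Finset.mem_univ _, rfl⟩))))
  have hR3 : ∀ i, ∀ l ∈ S i, l ∈ R := fun i l hl => hsR _ (by
    simp only [s, Finset.mem_union, Finset.mem_biUnion]
    exact Or.inl (Or.inl (Or.inr ⟨i, Finset.mem_univ _, hl⟩)))
  have hR4 : ∀ i, ∀ l ∈ S i, ∀ m ∈ S i, (l - m)⁻¹ ∈ R := fun i l hl m hm => hsR _ (by
    simp only [s, Finset.mem_union, Finset.mem_biUnion]
    exact Or.inl (Or.inr ⟨i, Finset.mem_univ _, Finset.mem_image.mpr ⟨(l, m), Finset.mem_product.mpr ⟨hl, hm⟩, rfl⟩⟩))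
  have hR5 : ((ρ (u * v * (v * u)⁻¹) - 1) i0 j0)⁻¹ ∈ R := hsR _ (by
    simp only [s, Finset.mem_union, Finset.mem_singleton]
    exact Or.inr trivial)
  have hmulR : ∀ a b : Γ, (∀ i j, ρ a i j ∈ R) → (∀ i j, ρ b i j ∈ R) → ∀ i j, ρ (a * b) i j ∈ R := by
    intro a b ha hb i j
    rw [map_mul, Matrix.mul_apply]
    exact sum_mem fun k _ => mul_mem (ha i k) (hb k j)
  let U : Subgroup Γ := 
    { carrier := {x | (∀ i j, ρ x i j ∈ R) ∧ (∀ i j, ρ x⁻¹ i j ∈ R)}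
      mul_mem' := fun {a b} ha hb => ⟨hmulR a b ha.1 hb.1, by rw [_root_.mul_inv_rev]; exact hmulR _ _ hb.2 ha.2⟩
      one_mem' := by
        have : ∀ i j, ρ 1 i j ∈ R := by
          intro i j
          rw [map_one]
          by_cases h : i = j
          · subst h; rw [Matrix.one_apply_eq]; exact one_mem _
          · rw [Matrix.one_apply_ne h]; exact zero_mem _
        exact ⟨this, by rw [inv_one]; exact this⟩
      inv_mem' := fun {a} ha => ⟨ha.2, by rw [inv_inv]; exact ha.1⟩ }
  have hU : ∀ x, x ∈ U := by
    intro x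
    obtain ⟨k, rfl⟩ := hg x
    apply Subgroup.list_prod_mem
    intro y hy
    obtain ⟨i, rfl⟩ := (List.mem_ofFn' _ _).mp hy
    exact U.zpow_mem (show g i ∈ U from ⟨hR1 i, hR2 i⟩) _
  have hR : ∀ x i j, ρ x i j ∈ R := fun x => (hU x).1
  obtain ⟨P, T, hT, hP, hlt⟩ := spec_NT s r
  have hτ : ∀ p : P, Nonempty (R →+* ZMod p) := fun p => (hP p p.2).2.2
  let τ : ∀ p : P, R →+* ZMod p := fun p => (hτ p).some
  let θ : ∀ p : P, Γ →* (Matrix (Fin n) (Fin n) (ZMod p))ˣ := fun p =>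
    (((τ p).mapMatrix : Matrix (Fin n) (Fin n) R →+* _).toMonoidHom.comp (liftMat ρ R hR)).toHomUnits
  have hθ : ∀ (p : P) (x : Γ), ((θ p x : (Matrix (Fin n) (Fin n) (ZMod p))ˣ) : Matrix (Fin n) (Fin n) (ZMod p)) = (τ p).mapMatrix (liftMat ρ R hR x) :=
    fun p x => rfl
  have hord : ∀ p i, θ p (g i) ^ T = 1 := by
    intro p i
    have hpp := (hP p p.2).1
    have := Fact.mk hpp
    have h1 : θ p (g i) ^ (p : ℕ) = θ p (g i) := by
      apply Units.ext
      rw [Units.val_pow_eq_pow_val, hθ]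
      refine ss_order _ (S i) (hS i) R _ ?_ (hR3 i) (hR4 i) (τ p)
      ext a b
      rfl
    have h2 : θ p (g i) ^ ((p : ℕ) - 1) = 1 := by
      have h3 : θ p (g i) ^ ((p : ℕ) - 1) * θ p (g i) = 1 * θ p (g i) := by
        rw [← pow_succ, Nat.sub_add_cancel hpp.one_le, h1, one_mul]
      exact mul_right_cancel h3
    obtain ⟨c, hc⟩ := (hP p p.2).2.1
    rw [hc, pow_mul, h2, one_pow]
  obtain ⟨p, hp1, hp2⟩ := good_prime P T r θ g hg hord (fun p hp => (hP p hp).1) hT hlt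
  have := Fact.mk (hP p p.2).1
  obtain ⟨A, hA1, hA2⟩ := jordan_p hp1 ((Units.coeHom _).comp (θ p).range.subtype) 
    (fun a b h => Subtype.ext (Units.ext h))
  have hidx : (A.comap (θ p).rangeRestrict).index = A.index := 
    A.index_comap_of_surjective (θ p).rangeRestrict_surjective
  have hle := hΓ0 (A.comap (θ p).rangeRestrict) (by rw [hidx]; exact Subgroup.index_ne_zero_of_finite) (by rw [hidx]; exact hA2)
  have h1 := hA1 _ (hle hu) _ (hle hv)
  have h2 : θ p u * θ p v = θ p v * θ p u := congrArg Subtype.val h1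
  have h3 : θ p (u * v * (v * u)⁻¹) = 1 := by
    rw [map_mul, map_inv, map_mul, map_mul, h2, mul_inv_cancel]
  refine liftMat_ne_one ρ R hR (τ p) _ i0 j0 hij hR5 ?_
  rw [← hθ, h3]
  rfl
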